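/- arXiv:0802.3434 — 2 statements merged into one kernel-verified Lean document; each statement's English description precedes it below -/
import Mathlib

section
/- With the covering numbers N(α,δ,n,ε) of the approximate level sets X_Φ(α,δ,n), the iterated limits defining Λ_Φ(α) exist and the limsup and liminf versions coincide: lim_{ε→0} lim_{δ→0} limsup_{n→∞} (1/n) log N(α,δ,n,ε) = lim_{ε→0} lim_{δ→0} liminf_{n→∞} (1/n) log N(α,δ,n,ε). -/
open MeasureTheory Filter Topology Set
open scoped ENNReal NNReal

/-!  General definitions: Bowen topological entropy (via covers by Bowen balls),
measure-theoretic (Kolmogorov–Sinai) entropy, generic points, saturated systems,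
and the specification property. -/

variable {X : Type*}

/-- The Bowen ball of center `x`, order `n`, radius `ε` (for the metric
`d_n(x,y) = max_{0 ≤ j < n} d(T^j x, T^j y)`). -/
def bowenBall [PseudoMetricSpace X] (T : X → X) (x : X) (n : ℕ) (ε : ℝ) : Set X :=
  {y | ∀ j < n, dist (T^[j] x) (T^[j] y) < ε}

/-- `H_n^s(Z,ε)`: infimum of `Σ_i exp(-s n_i)` over countable covers of `Z` by Bowen balls
`B_{n_i}(x_i,ε)` with all `n_i ≥ n`. -/
noncomputable def bowenH [PseudoMetricSpace X] (T : X → X) (Z : Set X) (s ε : ℝ) (n : ℕ) :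
    ℝ≥0∞ :=
  ⨅ (C : Set (X × ℕ)) (_ : C.Countable) (_ : ∀ p ∈ C, n ≤ p.2)
    (_ : Z ⊆ ⋃ p ∈ C, bowenBall T p.1 p.2 ε),
    ∑' p : C, ENNReal.ofReal (Real.exp (-s * ((p : X × ℕ).2 : ℝ)))

/-- `h_top(Z,ε)`: the critical exponent of `s ↦ H^s(Z,ε) = sup_n H_n^s(Z,ε)`. -/
noncomputable def bowenEntropyRes [PseudoMetricSpace X] (T : X → X) (Z : Set X) (ε : ℝ) :
    ℝ≥0∞ :=
  sInf ((fun s : ℝ≥0 => (s : ℝ≥0∞)) '' {s : ℝ≥0 | (⨆ n, bowenH T Z (s : ℝ) ε n) = 0})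

/-- Bowen topological entropy of a subset `Z`: `h_top(Z) = lim_{ε → 0} h_top(Z,ε)`
(the limit being a supremum by monotonicity in `ε`). -/
noncomputable def bowenEntropy [PseudoMetricSpace X] (T : X → X) (Z : Set X) : ℝ≥0∞ :=
  ⨆ (ε : ℝ) (_ : 0 < ε), bowenEntropyRes T Z ε

/-- Entropy of the partition `P ∨ T⁻¹P ∨ ⋯ ∨ T⁻⁽ⁿ⁻¹⁾P`, where a countable partition is
encoded as a function `P : X → ℕ`: it is the Shannon entropy of the map
`x ↦ (P x, P (T x), …, P (Tⁿ⁻¹ x))`. -/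
noncomputable def partInfo [MeasurableSpace X] (T : X → X) (μ : Measure X) (P : X → ℕ)
    (n : ℕ) : ℝ≥0∞ :=
  ∑' l : List ℕ, ENNReal.ofReal (Real.negMulLog
    ((μ ((fun x => (List.range n).map fun j => P (T^[j] x)) ⁻¹' {l})).toReal))

/-- Measure-theoretic (Kolmogorov–Sinai) entropy `h_μ(T)`: supremum over finite measurable
partitions `P` of `lim_n (1/n) H_μ(P ∨ T⁻¹P ∨ ⋯ ∨ T⁻⁽ⁿ⁻¹⁾P)` (the limit exists by
subadditivity, so it may be written as a `liminf`). -/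
noncomputable def ksEntropy [MeasurableSpace X] (T : X → X) (μ : Measure X) : ℝ≥0∞ :=
  ⨆ (P : X → ℕ) (_ : Measurable P) (_ : (Set.range P).Finite),
    Filter.atTop.liminf fun n : ℕ => partInfo T μ P n / (n : ℝ≥0∞)

/-- `x` is a generic point for `μ` : the empirical measures `(1/n) Σ_{j<n} δ_{T^j x}`
converge to `μ` in the weak-star topology, i.e. Birkhoff averages of every continuous
function converge to its integral. -/
def IsGeneric [TopologicalSpace X] [MeasurableSpace X] (T : X → X) (μ : Measure X)
    (x : X) : Prop :=
  ∀ f : C(X, ℝ), Tendsto (fun n : ℕ => (∑ j ∈ Finset.range n, f (T^[j] x)) / (n : ℝ))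
    atTop (𝓝 (∫ y, f y ∂μ))

/-- `μ ∈ V(x)` : `μ` is a weak-star limit point of the empirical measures of `x`. -/
def IsLimitMeasure [TopologicalSpace X] [MeasurableSpace X] (T : X → X) (x : X)
    (μ : Measure X) : Prop :=
  ∃ φ : ℕ → ℕ, StrictMono φ ∧ ∀ f : C(X, ℝ),
    Tendsto (fun m : ℕ => (∑ j ∈ Finset.range (φ m), f (T^[j] x)) / (φ m : ℝ))
      atTop (𝓝 (∫ y, f y ∂μ))

/-- A system is saturated if `h_top(G_μ) = h_μ` for every invariant Borel probability
measure `μ`. -/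
def Saturated [PseudoMetricSpace X] [MeasurableSpace X] (T : X → X) : Prop :=
  ∀ μ : Measure X, IsProbabilityMeasure μ → MeasurePreserving T μ μ →
    bowenEntropy T {x | IsGeneric T μ x} = ksEntropy T μ

/-- The specification property. -/
def SpecificationProperty [PseudoMetricSpace X] (T : X → X) : Prop :=
  ∀ ε : ℝ, 0 < ε → ∃ m : ℕ, 1 ≤ m ∧
    ∀ k : ℕ, 2 ≤ k → ∀ x : ℕ → X, ∀ a b : ℕ → ℕ,
      (∀ i < k, a i ≤ b i) →
      (∀ i, i + 1 < k → b i + m ≤ a (i + 1)) →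
      ∃ y : X, ∀ i < k, ∀ n ≤ b i - a i,
        dist (T^[a i + n] y) (T^[n] (x i)) < ε

/-- The Birkhoff average `A_n f(x) = (1/n) Σ_{j<n} f(T^j x)` of a real function. -/
noncomputable def birkhoffAvgR {X : Type*} (T : X → X) (f : X → ℝ) (n : ℕ) (x : X) : ℝ :=
  (∑ j ∈ Finset.range n, f (T^[j] x)) / (n : ℝ)

/-- The approximate level set `X_Φ(α,δ,n) = {x : Σ_i p_i |A_nΦ_i(x) - α_i| < δ}`. -/
def levelSet {X : Type*} (T : X → X) (Φ : ℕ → X → ℝ) (p α : ℕ → ℝ) (δ : ℝ) (n : ℕ) :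
    Set X :=
  {x | (∑' i : ℕ, p i * |birkhoffAvgR T (Φ i) n x - α i|) < δ}

/-- `N(S,n,ε)`: the minimal number of Bowen balls `B_n(x,ε)` needed to cover `S`. -/
noncomputable def coverNum {X : Type*} [PseudoMetricSpace X] (T : X → X) (S : Set X)
    (n : ℕ) (ε : ℝ) : ℕ :=
  sInf {m : ℕ | ∃ F : Finset X, F.card = m ∧ S ⊆ ⋃ x ∈ F, bowenBall T x n ε}

/-- `Λ_Φ(α) = lim_{ε→0} lim_{δ→0} limsup_n (1/n) log N(α,δ,n,ε)`; the limit in `ε` is an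
increasing limit (a supremum) and the limit in `δ` is a decreasing limit (an infimum). -/
noncomputable def LambdaPhi {X : Type*} [PseudoMetricSpace X] (T : X → X)
    (Φ : ℕ → X → ℝ) (p α : ℕ → ℝ) : ℝ≥0∞ :=
  ⨆ (ε : ℝ) (_ : 0 < ε), ⨅ (δ : ℝ) (_ : 0 < δ),
    Filter.atTop.limsup fun n : ℕ =>
      ENNReal.ofReal (Real.log (coverNum T (levelSet T Φ p α δ n) n ε) / (n : ℝ))

/-!
The condition `Σ_i p_i |A_nΦ_i - α_i| < δ` says that the Birkhoff average of the continuous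
`ℓ¹`-valued observable `x ↦ (p_i Φ_i(x))_i` is `δ`-close to `(p_i α_i)_i`, so only Birkhoff
averages of one observable `V` with values in a normed space matter.

Let `m` be the gap that specification provides at a small scale. Any word of `k` points of the
level set `(δ/4, n)` is shadowed, with period `n + m`, by a single orbit; if `n` is large compared
with `m` and `N` with `n + m`, where `k = ⌊N / (n + m)⌋`, the shadowing point lies in the level set
`(δ, N)`, because the gaps and the final incomplete block contribute little to its Birkhoff sum.
Different words in a dynamical net give separated points, whence
`N(δ/4, n, ε) ^ ⌊N / (n + m)⌋ ≤ N(δ, N, ε/4)`. Taking logarithms and letting first `N` and then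
`n` tend to infinity bounds the `limsup` at `(δ/4, ε)` by the `liminf` at `(δ, ε/4)`. Monotonicity
in `δ` and `ε` makes the iterated limits an infimum and a supremum, which absorb the factor `4`.
-/

section Covers

open Dynamics UniformSpace
open scoped SetRel

lemma iterate_mem_ball_dynEntourage {T : X → X} {V : SetRel X X} {x y : X} {q n N : ℕ}
    (hy : y ∈ ball x (dynEntourage T V N)) (hN : q + n ≤ N) :
    T^[q] y ∈ ball (T^[q] x) (dynEntourage T V n) := by
  refine mem_dynEntourage.2 fun s hs => ?_
  simpa only [← Function.iterate_add_apply] using mem_dynEntourage.1 hy (s + q) (by omega)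

lemma exists_isDynNetIn_card_eq_pow {T : X → X} {V : SetRel X X} [V.IsRefl]
    {S S' : Set X} {n k l N : ℕ} (hnl : n ≤ l) (hN : k * l ≤ N) {s : Finset X}
    (hs : IsDynNetIn T S (V ○ V) n s)
    (hshadow : ∀ x : Fin k → X, (∀ i, x i ∈ S) →
      ∃ y ∈ S', ∀ i : Fin k, T^[i * l] y ∈ ball (x i) (dynEntourage T V n)) :
    ∃ t : Finset X, IsDynNetIn T S' V N t ∧ t.card = s.card ^ k := by
  classical
  choose y hyS' hy using fun w : Fin k → s => hshadow (fun i => w i) fun i => hs.1 (w i).2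
  -- The orbit of any point near `y w` follows the orbit of `w i` up to `V ○ V` along the `i`-th
  -- block, hence determines the word `w`.
  have hfollow (w : Fin k → s) (i : Fin k) : ∀ z ∈ ball (y w) (dynEntourage T V N),
      T^[i * l] z ∈ ball (w i : X) (dynEntourage T (V ○ V) n) := by
    intro z hz
    have hblock : i * l + n ≤ N := by
      calc i * l + n ≤ (i + 1) * l := by rw [add_one_mul]; omega
        _ ≤ N := (Nat.mul_le_mul_right l i.2).trans hN
    exact dynEntourage_comp_subset T V V n
      (mem_ball_comp (hy w i) (iterate_mem_ball_dynEntourage hz hblock))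
  have hdisj : Pairwise fun w w' =>
      Disjoint (ball (y w) (dynEntourage T V N)) (ball (y w') (dynEntourage T V N)) := by
    intro w w' hww'
    obtain ⟨i, hi⟩ := Function.ne_iff.1 hww'
    exact Set.disjoint_left.2 fun z hz hz' =>
      Set.disjoint_left.1 (hs.2 (w i).2 (w' i).2 (Subtype.coe_ne_coe.2 hi))
        (hfollow w i z hz) (hfollow w' i z hz')
  have hself (x : X) : x ∈ ball x (dynEntourage T V N) := mem_dynEntourage.2 fun _ _ => V.rfl
  have hinj : Function.Injective y := fun w w' h => by
    by_contra hne
    exact Set.disjoint_left.1 (hdisj hne) (hself _) (h ▸ hself _)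
  refine ⟨Finset.univ.image y, ⟨?_, ?_⟩, ?_⟩
  · simpa [Set.range_subset_iff] using hyS'
  · rw [Finset.coe_image, Finset.coe_univ, Set.image_univ]
    rintro _ ⟨w, rfl⟩ _ ⟨w', rfl⟩ hne
    exact hdisj (ne_of_apply_ne y hne)
  · simp [Finset.card_image_of_injective _ hinj]

/-- The entourage `{(x, y) | d(x, y) < ε}`, whose dynamical entourages have the Bowen balls as
sections. -/
def distLT (X : Type*) [PseudoMetricSpace X] (ε : ℝ) : SetRel X X :=
  {p | dist p.1 p.2 < ε}

variable [PseudoMetricSpace X] {T : X → X} {S S' : Set X} {n N : ℕ} {ε : ℝ}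

instance (ε : ℝ) : (distLT X ε).IsSymm where
  symm x y h := by simpa [distLT, dist_comm] using h

lemma distLT_isRefl (hε : 0 < ε) : (distLT X ε).IsRefl where
  refl x := by simpa [distLT] using hε

lemma distLT_comp_subset (ε ε' : ℝ) : distLT X ε ○ distLT X ε' ⊆ distLT X (ε + ε') := by
  rintro ⟨x, z⟩ ⟨y, hxy, hyz⟩
  exact (dist_triangle x y z).trans_lt (add_lt_add hxy hyz)

lemma distLT_mono {ε ε' : ℝ} (h : ε ≤ ε') : distLT X ε ⊆ distLT X ε' :=
  fun _ hp => lt_of_lt_of_le hp h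

lemma bowenBall_eq_ball (x : X) :
    bowenBall T x n ε = ball x (dynEntourage T (distLT X ε) n) := by
  ext y
  simp only [bowenBall, mem_ball_dynEntourage, distLT, mem_ofPred_eq]
  rfl

lemma isDynCoverOf_distLT_iff {F : Set X} :
    IsDynCoverOf T S (distLT X ε) n F ↔ S ⊆ ⋃ x ∈ F, bowenBall T x n ε := by
  simp only [bowenBall_eq_ball]
  exact isCover_iff_subset_iUnion_ball

lemma coverMincard_lt_top {X : Type*} [UniformSpace X] [CompactSpace X] {T : X → X}
    {V : SetRel X X} (hT : Continuous T) (hV : V ∈ uniformity X) (S : Set X) (n : ℕ) :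
    coverMincard T S V n < ⊤ :=
  (coverMincard_monotone_subset T V n (subset_univ S)).trans_lt <|
    coverMincard_finite_of_isCompact_uniformContinuous isCompact_univ
      (CompactSpace.uniformContinuous_of_continuous hT) hV n

variable [CompactSpace X]

lemma natCast_coverNum (hT : Continuous T) (S : Set X) (n : ℕ) (hε : 0 < ε) :
    (coverNum T S n ε : ℕ∞) = coverMincard T S (distLT X ε) n := by
  obtain ⟨s, hs, hcard⟩ := (coverMincard_finite_iff T S (distLT X ε) n).1
    (coverMincard_lt_top hT (Metric.dist_mem_uniformity hε) S n)
  have hcover : s.card ∈ {m | ∃ F : Finset X, F.card = m ∧ S ⊆ ⋃ x ∈ F, bowenBall T x n ε} :=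
    ⟨s, rfl, isDynCoverOf_distLT_iff.1 hs⟩
  refine le_antisymm ?_ ?_
  · rw [← hcard]
    exact Nat.cast_le.2 (Nat.sInf_le hcover)
  · obtain ⟨F, hF, hcov⟩ := Nat.sInf_mem ⟨_, hcover⟩
    rw [coverNum, ← hF]
    exact (isDynCoverOf_distLT_iff.2 hcov).coverMincard_le_card

lemma coverNum_mono (hT : Continuous T) (hS : S ⊆ S') (n : ℕ) {ε ε' : ℝ} (hε : 0 < ε)
    (h_le : ε ≤ ε') : coverNum T S n ε' ≤ coverNum T S' n ε := by
  rw [← Nat.cast_le (α := ℕ∞), natCast_coverNum hT S n (hε.trans_le h_le),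
    natCast_coverNum hT S' n hε]
  exact (coverMincard_monotone_subset T _ n hS).trans
    (coverMincard_antitone T S' n (distLT_mono h_le))

/- The factor `4` is lost in two halves: a maximal net for `U` is only a cover for `U ○ U`, and
gluing orbits turns a net for `U = V ○ V` into one for `V`. -/
lemma coverNum_pow_le_coverNum (hT : Continuous T) {k l : ℕ} (hε : 0 < ε) (hnl : n ≤ l)
    (hN : k * l ≤ N)
    (hshadow : ∀ x : Fin k → X, (∀ i, x i ∈ S) →
      ∃ y ∈ S', ∀ i : Fin k, T^[i * l] y ∈ bowenBall T (x i) n (ε / 4)) :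
    coverNum T S n ε ^ k ≤ coverNum T S' N (ε / 4) := by
  set V := distLT X (ε / 4)
  have hε4 : 0 < ε / 4 := by positivity
  have : V.IsRefl := distLT_isRefl hε4
  have hVε : (V ○ V) ○ (V ○ V) ⊆ distLT X ε := by
    have hV2 : V ○ V ⊆ distLT X (ε / 2) :=
      (distLT_comp_subset _ _).trans (distLT_mono (by linarith))
    calc (V ○ V) ○ (V ○ V) ⊆ distLT X (ε / 2) ○ distLT X (ε / 2) :=
          SetRel.comp_subset_comp hV2 hV2
      _ ⊆ distLT X (ε / 2 + ε / 2) := distLT_comp_subset _ _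
      _ = distLT X ε := by rw [add_halves]
  have hV : V ∈ uniformity X := Metric.dist_mem_uniformity hε4
  have hfin : netMaxcard T S (V ○ V) n < ⊤ := (netMaxcard_le_coverMincard T S n).trans_lt
    (coverMincard_lt_top hT (mem_of_superset hV (subset_comp_self_of_mem_uniformity hV)) S n)
  obtain ⟨s, hs, hcard⟩ := (netMaxcard_finite_iff T S (V ○ V) n).1 hfin
  obtain ⟨t, ht, htcard⟩ := exists_isDynNetIn_card_eq_pow hnl hN hs
    (by simpa only [bowenBall_eq_ball] using hshadow)
  have hs_le : coverNum T S n ε ≤ s.card := by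
    rw [← Nat.cast_le (α := ℕ∞), natCast_coverNum hT S n hε, hcard]
    exact (coverMincard_antitone T S n hVε).trans (coverMincard_le_netMaxcard T S n)
  have ht_le : t.card ≤ coverNum T S' N (ε / 4) := by
    rw [← Nat.cast_le (α := ℕ∞), natCast_coverNum hT S' N hε4]
    exact ht.card_le_netMaxcard.trans (netMaxcard_le_coverMincard T S' N)
  calc coverNum T S n ε ^ k ≤ s.card ^ k := Nat.pow_le_pow_left hs_le k
    _ = t.card := htcard.symm
    _ ≤ coverNum T S' N (ε / 4) := ht_le

end Covers

lemma SpecificationProperty.exists_shadowing [PseudoMetricSpace X] {T : X → X}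
    (hspec : SpecificationProperty T) {η : ℝ} (hη : 0 < η) :
    ∃ m : ℕ, ∀ n k : ℕ, 2 ≤ k → ∀ x : Fin k → X,
      ∃ y : X, ∀ i : Fin k, T^[i * (n + m)] y ∈ bowenBall T (x i) n η := by
  obtain ⟨m, -, hm⟩ := hspec η hη
  refine ⟨m, fun n k hk x => ?_⟩
  let x' : ℕ → X := Function.extend Fin.val x fun _ => x ⟨0, by omega⟩
  have hx' (i : Fin k) : x' i = x i := Fin.val_injective.extend_apply _ _ i
  obtain ⟨y, hy⟩ := hm k hk x' (fun i => i * (n + m)) (fun i => i * (n + m) + (n - 1))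
    (fun i _ => Nat.le_add_right _ _) fun i _ => by rw [add_one_mul]; omega
  refine ⟨y, fun i s hs => ?_⟩
  have h := hy i i.2 s (by omega)
  rwa [hx', dist_comm, add_comm, Function.iterate_add_apply] at h

section BirkhoffSums

variable {E : Type*} {T : X → X}

section Seminormed

variable [SeminormedAddCommGroup E] {W : X → E} {C κ : ℝ} {n : ℕ}

lemma norm_birkhoffSum_le (hW : ∀ x, ‖W x‖ ≤ C) (n : ℕ) (x : X) :
    ‖birkhoffSum T W n x‖ ≤ n * C :=
  (norm_sum_le_of_le _ fun _ _ => hW _).trans (by simp)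

lemma norm_birkhoffSum_le_add_of_dist_le {x y : X}
    (hxy : ∀ j < n, dist (W (T^[j] x)) (W (T^[j] y)) ≤ κ) :
    ‖birkhoffSum T W n y‖ ≤ ‖birkhoffSum T W n x‖ + n * κ := by
  have hdist : dist (birkhoffSum T W n x) (birkhoffSum T W n y) ≤ n * κ :=
    (dist_sum_sum_le_of_le _ fun j hj => hxy j (Finset.mem_range.1 hj)).trans (by simp)
  rw [dist_comm, dist_eq_norm] at hdist
  exact (norm_le_norm_add_norm_sub' _ _).trans (by gcongr)

lemma norm_birkhoffSum_mul_le {k l : ℕ} {B : ℝ} {x : X}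
    (hB : ∀ i < k, ‖birkhoffSum T W l (T^[i * l] x)‖ ≤ B) :
    ‖birkhoffSum T W (k * l) x‖ ≤ k * B := by
  induction k with
  | zero => simp
  | succ k ih =>
    rw [add_one_mul, birkhoffSum_add]
    calc _ ≤ k * B + B := norm_add_le_of_le (ih fun i hi => hB i (by omega)) (hB k (by omega))
      _ = _ := by push_cast; ring

lemma norm_birkhoffSum_le_div_mul_add (hW : ∀ x, ‖W x‖ ≤ C) {l N : ℕ} (hl : 0 < l) {B : ℝ}
    {x : X} (hB : ∀ i < N / l, ‖birkhoffSum T W l (T^[i * l] x)‖ ≤ B) :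
    ‖birkhoffSum T W N x‖ ≤ (N / l : ℕ) * B + l * C := by
  have hC : 0 ≤ C := (norm_nonneg _).trans (hW x)
  have hmod : (N % l : ℕ) * C ≤ l * C := by gcongr; exact (Nat.mod_lt N hl).le
  conv_lhs => rw [← Nat.div_add_mod' N l, birkhoffSum_add]
  exact norm_add_le_of_le (norm_birkhoffSum_mul_le hB) ((norm_birkhoffSum_le hW _ _).trans hmod)

lemma norm_birkhoffSum_lt_of_shadowing {δ : ℝ} {m N : ℕ} (hW : ∀ x, ‖W x‖ ≤ C)
    (hn : m * C < n * (δ / 4)) (hN : (n + m) * C < N * (δ / 4)) {x : Fin (N / (n + m)) → X}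
    {y : X} (hx : ∀ i, ‖birkhoffSum T W n (x i)‖ ≤ n * (δ / 4))
    (hxy : ∀ i, ∀ j < n, dist (W (T^[j] (x i))) (W (T^[j] (T^[i * (n + m)] y))) ≤ δ / 4) :
    ‖birkhoffSum T W N y‖ < N * δ := by
  have hC : 0 ≤ C := (norm_nonneg _).trans (hW y)
  have hnδ : 0 < n * (δ / 4) := (by positivity : 0 ≤ m * C).trans_lt hn
  have hn0 : 0 < n := by
    rcases n.eq_zero_or_pos with rfl | h
    · simp at hnδ
    · exact h
  have hδ : 0 < δ := by
    have := pos_of_mul_pos_right hnδ n.cast_nonneg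
    linarith
  have hblock : ∀ i < N / (n + m),
      ‖birkhoffSum T W (n + m) (T^[i * (n + m)] y)‖ ≤ n * (3 / 4 * δ) := by
    intro i hi
    rw [birkhoffSum_add]
    calc _ ≤ n * (δ / 4) + n * (δ / 4) + m * C :=
          norm_add_le_of_le
            ((norm_birkhoffSum_le_add_of_dist_le (hxy ⟨i, hi⟩)).trans
              (add_le_add_left (hx ⟨i, hi⟩) _))
            (norm_birkhoffSum_le hW m _)
      _ ≤ n * (3 / 4 * δ) := by linarith
  have hkn : ((N / (n + m) : ℕ) : ℝ) * n ≤ N := by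
    exact_mod_cast (Nat.mul_le_mul_left _ (Nat.le_add_right n m)).trans (Nat.div_mul_le_self N _)
  calc ‖birkhoffSum T W N y‖
      ≤ (N / (n + m) : ℕ) * (n * (3 / 4 * δ)) + (n + m : ℕ) * C :=
        norm_birkhoffSum_le_div_mul_add hW (by omega) hblock
    _ = (N / (n + m) : ℕ) * n * (3 / 4 * δ) + (n + m) * C := by push_cast; ring
    _ ≤ N * (3 / 4 * δ) + (n + m) * C := by gcongr
    _ < N * δ := by linarith

end Seminormed

variable [SeminormedAddCommGroup E] [NormedSpace ℝ E]

/-- The points whose `n`-th Birkhoff average of the vector-valued observable `V` is `δ`-close to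
`a`; the level sets `X_Φ(α, δ, n)` are of this form with `V` taking values in `ℓ¹`. -/
def birkhoffLevelSet (T : X → X) (V : X → E) (a : E) (δ : ℝ) (n : ℕ) : Set X :=
  {x | ‖birkhoffAverage ℝ T V n x - a‖ < δ}

lemma birkhoffLevelSet_mono (T : X → X) (V : X → E) (a : E) (n : ℕ) :
    Monotone fun δ => birkhoffLevelSet T V a δ n :=
  fun _ _ h _ hx => lt_of_lt_of_le hx h

lemma mem_birkhoffLevelSet_iff {V : X → E} {a : E} {δ : ℝ} {n : ℕ} (hn : n ≠ 0) {x : X} :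
    x ∈ birkhoffLevelSet T V a δ n ↔ ‖birkhoffSum T (fun u => V u - a) n x‖ < n * δ := by
  have hn' : (0 : ℝ) < n := by positivity
  have hsum : birkhoffSum T (fun u => V u - a) n x =
      (n : ℝ) • (birkhoffAverage ℝ T V n x - a) := by
    rw [smul_sub, birkhoffAverage, smul_inv_smul₀ hn'.ne', Nat.cast_smul_eq_nsmul]
    simp [birkhoffSum]
  rw [hsum, norm_smul, Real.norm_natCast, mul_lt_mul_iff_right₀ hn']
  rfl

end BirkhoffSums

section KeyLemma

variable [PseudoMetricSpace X] [CompactSpace X] {T : X → X} {E : Type*}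
  [SeminormedAddCommGroup E] [NormedSpace ℝ E] {V : X → E} {ε δ : ℝ}

lemma exists_eventually_coverNum_birkhoffLevelSet_pow_le (hT : Continuous T)
    (hspec : SpecificationProperty T) (hV : Continuous V) (a : E) (hε : 0 < ε) (hδ : 0 < δ) :
    ∃ m, ∀ᶠ n in atTop, ∀ᶠ N in atTop,
      coverNum T (birkhoffLevelSet T V a (δ / 4) n) n ε ^ (N / (n + m)) ≤
        coverNum T (birkhoffLevelSet T V a δ N) N (ε / 4) := by
  set W : X → E := fun u => V u - a
  have hW : Continuous W := hV.sub continuous_const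
  obtain ⟨C, hC⟩ : ∃ C, ∀ x, ‖W x‖ ≤ C := by
    simpa using isCompact_univ.exists_bound_of_continuousOn hW.continuousOn
  obtain ⟨η, hη, hWη⟩ := Metric.uniformContinuous_iff.1
    (CompactSpace.uniformContinuous_of_continuous hW) (δ / 4) (by positivity)
  obtain ⟨m, hm⟩ := hspec.exists_shadowing (lt_min hη (by positivity : 0 < ε / 4))
  have hlarge (c : ℝ) : ∀ᶠ n : ℕ in atTop, c < n * (δ / 4) :=
    (tendsto_natCast_atTop_atTop.atTop_mul_const (by positivity)).eventually_gt_atTop c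
  refine ⟨m, ?_⟩
  filter_upwards [hlarge (m * C), eventually_ge_atTop 1] with n hn hn1
  filter_upwards [hlarge ((n + m) * C), eventually_ge_atTop (2 * (n + m))] with N hN hN2
  refine coverNum_pow_le_coverNum hT hε (Nat.le_add_right n m) (Nat.div_mul_le_self N _)
    fun x hx => ?_
  obtain ⟨y, hy⟩ := hm n (N / (n + m)) ((Nat.le_div_iff_mul_le (by omega)).2 hN2) x
  refine ⟨y, ?_, fun i j hj => (hy i j hj).trans_le (min_le_right _ _)⟩
  rw [mem_birkhoffLevelSet_iff (by omega)]
  exact norm_birkhoffSum_lt_of_shadowing hC hn hN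
    (fun i => ((mem_birkhoffLevelSet_iff (by omega)).1 (hx i)).le)
    fun i j hj => (hWη ((hy i j hj).trans_le (min_le_left _ _))).le

end KeyLemma

section LogRate

/-- The sequence `(1/n) log u(n)` in `[0, ∞]`; its value is `0` where `u` vanishes. -/
noncomputable def logRate (u : ℕ → ℕ) (n : ℕ) : ℝ≥0∞ :=
  ENNReal.ofReal (Real.log (u n) / n)

lemma monotone_log_natCast : Monotone fun n : ℕ => Real.log n := by
  intro a b hab
  rcases a.eq_zero_or_pos with rfl | ha
  · simpa using Real.log_natCast_nonneg b
  · exact Real.log_le_log (by positivity) (by exact_mod_cast hab)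

lemma logRate_mono : Monotone logRate := fun _ _ huv n =>
  ENNReal.ofReal_le_ofReal <|
    div_le_div_of_nonneg_right (monotone_log_natCast (huv n)) n.cast_nonneg

lemma tendsto_natCast_div_div_atTop (l : ℕ) :
    Tendsto (fun N : ℕ => ((N / l : ℕ) : ℝ) / N) atTop (𝓝 (l : ℝ)⁻¹) := by
  refine ((tendsto_nat_floor_mul_div_atTop (by positivity : (0 : ℝ) ≤ (l : ℝ)⁻¹)).comp
    tendsto_natCast_atTop_atTop).congr fun N => ?_
  simp only [Function.comp_apply, inv_mul_eq_div, Nat.floor_div_eq_div]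

lemma ofReal_log_div_le_liminf_logRate {c l : ℕ} {v : ℕ → ℕ}
    (h : ∀ᶠ N in atTop, c ^ (N / l) ≤ v N) :
    ENNReal.ofReal (Real.log c / l) ≤ atTop.liminf (logRate v) := by
  have hlim : Tendsto (fun N : ℕ => ENNReal.ofReal (((N / l : ℕ) : ℝ) / N * Real.log c)) atTop
      (𝓝 (ENNReal.ofReal (Real.log c / l))) := by
    rw [div_eq_inv_mul]
    exact ENNReal.tendsto_ofReal ((tendsto_natCast_div_div_atTop l).mul_const _)
  rw [← hlim.liminf_eq]
  refine liminf_le_liminf (h.mono fun N hN => ENNReal.ofReal_le_ofReal ?_)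
  calc ((N / l : ℕ) : ℝ) / N * Real.log c = Real.log (c ^ (N / l) : ℕ) / N := by
        rw [Nat.cast_pow, Real.log_pow, div_mul_eq_mul_div]
    _ ≤ Real.log (v N) / N := div_le_div_of_nonneg_right (monotone_log_natCast hN) N.cast_nonneg

lemma limsup_logRate_le_of_eventually_ofReal_log_div_add_le {u : ℕ → ℕ} (m : ℕ) {c : ℝ≥0∞}
    (h : ∀ᶠ n in atTop, ENNReal.ofReal (Real.log (u n) / (n + m : ℕ)) ≤ c) :
    atTop.limsup (logRate u) ≤ c := by
  have hlim : Tendsto (fun n : ℕ => ((n + m : ℕ) : ℝ) / n) atTop (𝓝 1) := by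
    simpa using (tendsto_natCast_div_add_atTop (m : ℝ)).inv₀ one_ne_zero
  have hlim' : Tendsto (fun n : ℕ => c * ENNReal.ofReal ((n + m : ℕ) / n)) atTop (𝓝 c) := by
    simpa using ENNReal.Tendsto.const_mul (a := c) (ENNReal.tendsto_ofReal hlim) (by simp)
  rw [← hlim'.limsup_eq]
  refine limsup_le_limsup ?_
  filter_upwards [h, eventually_gt_atTop 0] with n hn hn0
  have hsplit : Real.log (u n) / n = Real.log (u n) / (n + m : ℕ) * ((n + m : ℕ) / n) :=
    (div_mul_div_cancel₀ (by positivity)).symm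
  rw [logRate, hsplit, ENNReal.ofReal_mul' (by positivity)]
  gcongr

lemma limsup_logRate_le_liminf_logRate {u v : ℕ → ℕ} (m : ℕ)
    (h : ∀ᶠ n in atTop, ∀ᶠ N in atTop, u n ^ (N / (n + m)) ≤ v N) :
    atTop.limsup (logRate u) ≤ atTop.liminf (logRate v) :=
  limsup_logRate_le_of_eventually_ofReal_log_div_add_le m
    (h.mono fun _ => ofReal_log_div_le_liminf_logRate)

end LogRate

section IteratedLimits

variable {α β : Type*} [LinearOrder α] [CompleteLinearOrder β]
  [TopologicalSpace α] [OrderTopology α] [TopologicalSpace β] [OrderTopology β]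
  {f : α → β} {x : α}

lemma tendsto_nhdsGT_iInf_of_monotoneOn (hf : MonotoneOn f (Ioi x)) :
    Tendsto f (𝓝[>] x) (𝓝 (⨅ y ∈ Ioi x, f y)) := by
  simpa only [sInf_image] using hf.tendsto_nhdsGT (OrderBot.bddBelow _)

lemma tendsto_nhdsGT_iSup_of_antitoneOn (hf : AntitoneOn f (Ioi x)) :
    Tendsto f (𝓝[>] x) (𝓝 (⨆ y ∈ Ioi x, f y)) := by
  simpa only [sSup_image] using hf.tendsto_nhdsGT (OrderTop.bddAbove _)

end IteratedLimits

lemma biSup_biInf_eq_of_le_of_forall_exists_le {α β : Type*} [CompleteLattice β] {s : Set α}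
    {u l : α → α → β} (hlu : l ≤ u)
    (hul : ∀ ε ∈ s, ∃ ε' ∈ s, ∀ δ ∈ s, ∃ δ' ∈ s, u ε δ' ≤ l ε' δ) :
    ⨆ ε ∈ s, ⨅ δ ∈ s, u ε δ = ⨆ ε ∈ s, ⨅ δ ∈ s, l ε δ := by
  refine le_antisymm (iSup₂_le fun ε hε => ?_)
    (iSup₂_mono fun ε _ => iInf₂_mono fun δ _ => hlu ε δ)
  obtain ⟨ε', hε', h⟩ := hul ε hε
  refine le_trans (le_iInf₂ fun δ hδ => ?_) (le_iSup₂_of_le ε' hε' le_rfl)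
  obtain ⟨δ', hδ', hle⟩ := h δ hδ
  exact (iInf₂_le δ' hδ').trans hle

section General

variable [PseudoMetricSpace X] {E : Type*} [SeminormedAddCommGroup E] [NormedSpace ℝ E]

/-- The covering number `N(α, δ, n, ε)` of the level sets of a vector-valued observable, as a
sequence in `n`. -/
noncomputable def levelCoverNum (T : X → X) (V : X → E) (a : E) (ε δ : ℝ) (n : ℕ) : ℕ :=
  coverNum T (birkhoffLevelSet T V a δ n) n ε

variable [CompactSpace X] {T : X → X}

lemma levelCoverNum_mono (hT : Continuous T) (V : X → E) (a : E) {ε ε' δ δ' : ℝ} (hε : 0 < ε)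
    (hεε' : ε ≤ ε') (hδδ' : δ ≤ δ') :
    levelCoverNum T V a ε' δ ≤ levelCoverNum T V a ε δ' := fun n =>
  coverNum_mono hT (birkhoffLevelSet_mono T V a n hδδ') n hε hεε'

theorem lambda_limits_exist_general (hT : Continuous T)
    (hspec : SpecificationProperty T) {V : X → E} (hV : Continuous V) (a : E) :
    ∃ (F G : ℝ → ℝ≥0∞) (Ls Li : ℝ≥0∞),
      (∀ ε, 0 < ε → Tendsto (fun δ => atTop.limsup (logRate (levelCoverNum T V a ε δ)))
        (𝓝[>] 0) (𝓝 (F ε))) ∧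
      Tendsto F (𝓝[>] 0) (𝓝 Ls) ∧
      (∀ ε, 0 < ε → Tendsto (fun δ => atTop.liminf (logRate (levelCoverNum T V a ε δ)))
        (𝓝[>] 0) (𝓝 (G ε))) ∧
      Tendsto G (𝓝[>] 0) (𝓝 Li) ∧ Ls = Li := by
  have hmono {ε ε' δ δ' : ℝ} (hε : 0 < ε) (hεε' : ε ≤ ε') (hδδ' : δ ≤ δ') :
      logRate (levelCoverNum T V a ε' δ) ≤ logRate (levelCoverNum T V a ε δ') :=
    logRate_mono (levelCoverNum_mono hT V a hε hεε' hδδ')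
  refine ⟨_, _, _, _,
    fun ε hε => tendsto_nhdsGT_iInf_of_monotoneOn fun δ _ δ' _ h =>
      limsup_le_limsup (.of_forall (hmono hε le_rfl h)),
    tendsto_nhdsGT_iSup_of_antitoneOn fun ε hε ε' _ h =>
      iInf₂_mono fun δ _ => limsup_le_limsup (.of_forall (hmono hε h le_rfl)),
    fun ε hε => tendsto_nhdsGT_iInf_of_monotoneOn fun δ _ δ' _ h =>
      liminf_le_liminf (.of_forall (hmono hε le_rfl h)),
    tendsto_nhdsGT_iSup_of_antitoneOn fun ε hε ε' _ h =>
      iInf₂_mono fun δ _ => liminf_le_liminf (.of_forall (hmono hε h le_rfl)),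
    biSup_biInf_eq_of_le_of_forall_exists_le (fun ε δ => liminf_le_limsup) fun ε hε =>
      ⟨ε / 4, mem_Ioi.2 (div_pos hε four_pos), fun δ hδ =>
        ⟨δ / 4, mem_Ioi.2 (div_pos hδ four_pos), ?_⟩⟩⟩
  obtain ⟨m, hm⟩ := exists_eventually_coverNum_birkhoffLevelSet_pow_le hT hspec hV a hε hδ
  exact limsup_logRate_le_liminf_logRate m hm

end General

section LpOne

variable {ι : Type*} {E : ι → Type*} [∀ i, NormedAddCommGroup (E i)]

lemma lp_one_norm_eq_tsum (v : lp E 1) : ‖v‖ = ∑' i, ‖v i‖ := by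
  rw [lp.norm_eq_tsum_rpow (by simp)]
  simp only [ENNReal.toReal_one, Real.rpow_one, div_one]

lemma continuous_lp_of_norm_le_summable [∀ i, CompleteSpace (E i)] [TopologicalSpace X]
    {p : ℝ≥0∞} [Fact (1 ≤ p)] (hp : p ≠ ⊤) {f : X → lp E p}
    (hf : ∀ i, Continuous fun x => f x i) {b : ι → ℝ} (hb : Summable b)
    (hfb : ∀ i x, ‖f x i‖ ≤ b i) : Continuous f := by
  classical
  have hsum : f = fun x => ∑' i, lp.single p i (f x i) :=
    funext fun x => (lp.hasSum_single hp (f x)).tsum_eq.symm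
  rw [hsum]
  refine continuous_tsum (fun i => (lp.isometry_single i).continuous.comp (hf i)) hb fun i x => ?_
  rw [lp.norm_single (zero_lt_one.trans_le Fact.out)]
  exact hfb i x

lemma memℓp_one_of_norm_le_summable {v : ∀ i, E i} {b : ι → ℝ} (hb : Summable b)
    (hv : ∀ i, ‖v i‖ ≤ b i) : Memℓp v 1 :=
  memℓp_gen (by simpa using hb.of_nonneg_of_le (fun i => norm_nonneg _) hv)

end LpOne

lemma exists_birkhoffLevelSet_eq_levelSet [TopologicalSpace X] (T : X → X)
    {Φ : ℕ → X → ℝ} (hΦ : ∀ i, Continuous (Φ i)) {M : ℝ} (hM : ∀ i x, |Φ i x| ≤ M)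
    {p : ℕ → ℝ} (hp : ∀ i, 0 ≤ p i) (hps : Summable p) {α : ℕ → ℝ} {C : ℝ}
    (hα : ∀ i, |α i| ≤ C) :
    ∃ (V : X → lp (fun _ : ℕ => ℝ) 1) (a : lp (fun _ : ℕ => ℝ) 1), Continuous V ∧
      ∀ δ n, birkhoffLevelSet T V a δ n = levelSet T Φ p α δ n := by
  have hbound {C v : ℝ} (i : ℕ) (hv : |v| ≤ C) : ‖p i * v‖ ≤ p i * C := by
    rw [Real.norm_eq_abs, abs_mul, abs_of_nonneg (hp i)]
    exact mul_le_mul_of_nonneg_left hv (hp i)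
  let V : X → lp (fun _ : ℕ => ℝ) 1 := fun x =>
    ⟨fun i => p i * Φ i x, memℓp_one_of_norm_le_summable (hps.mul_right M) fun i =>
      hbound i (hM i x)⟩
  let a : lp (fun _ : ℕ => ℝ) 1 :=
    ⟨fun i => p i * α i, memℓp_one_of_norm_le_summable (hps.mul_right C) fun i =>
      hbound i (hα i)⟩
  refine ⟨V, a, ?_, fun δ n => ?_⟩
  · exact continuous_lp_of_norm_le_summable ENNReal.one_ne_top
      (fun i => continuous_const.mul (hΦ i)) (hps.mul_right M) fun i x => hbound i (hM i x)
  · have hcoord (x : X) (i : ℕ) : (birkhoffAverage ℝ T V n x - a) i =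
        p i * (birkhoffAvgR T (Φ i) n x - α i) := by
      have havg : birkhoffAverage ℝ T V n x i = p i * birkhoffAvgR T (Φ i) n x := by
        calc birkhoffAverage ℝ T V n x i
            = birkhoffAverage ℝ T (fun u => p i * Φ i u) n x :=
              map_birkhoffAverage ℝ ℝ (lp.evalₗ (𝕜 := ℝ) (fun _ : ℕ => ℝ) 1 i) T V n x
          _ = p i * birkhoffAvgR T (Φ i) n x := by
              rw [birkhoffAverage, birkhoffSum, ← Finset.mul_sum, birkhoffAvgR, smul_eq_mul]
              ring
      rw [lp.coeFn_sub, Pi.sub_apply, havg, mul_sub]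
    ext x
    rw [birkhoffLevelSet, levelSet, mem_ofPred_eq, mem_ofPred_eq, lp_one_norm_eq_tsum]
    simp only [hcoord, Real.norm_eq_abs, abs_mul, abs_of_nonneg (hp _)]

/-- The iterated limits defining `Λ_Φ(α)` exist and the `limsup` and `liminf` versions
coincide: `lim_{ε→0} lim_{δ→0} limsup_n (1/n) log N(α,δ,n,ε)
= lim_{ε→0} lim_{δ→0} liminf_n (1/n) log N(α,δ,n,ε)`. -/
theorem lambda_limits_exist {X : Type*} [MetricSpace X] [CompactSpace X]
    [MeasurableSpace X] [BorelSpace X] (T : X → X) (hT : Continuous T)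
    (hspec : SpecificationProperty T)
    (Φ : ℕ → X → ℝ) (hΦc : ∀ i, Continuous (Φ i)) (hΦb : ∀ i x, |Φ i x| ≤ 1)
    (hdense : ∀ f : C(X, ℝ), ‖f‖ ≤ 1 → ∀ ε : ℝ, 0 < ε → ∃ i, ∀ x, |Φ i x - f x| < ε)
    (p : ℕ → ℝ) (hp : ∀ i, 0 < p i) (hps : Summable p) (hp1 : ∑' i, p i = 1)
    (α : ℕ → ℝ) (hα : ∃ C : ℝ, ∀ i, |α i| ≤ C) :
    ∃ (F G : ℝ → ℝ≥0∞) (Ls Li : ℝ≥0∞),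
      (∀ ε : ℝ, 0 < ε → Tendsto (fun δ : ℝ =>
            Filter.atTop.limsup fun n : ℕ =>
              ENNReal.ofReal (Real.log (coverNum T (levelSet T Φ p α δ n) n ε) / (n : ℝ)))
          (𝓝[>] 0) (𝓝 (F ε))) ∧
      Tendsto F (𝓝[>] (0 : ℝ)) (𝓝 Ls) ∧
      (∀ ε : ℝ, 0 < ε → Tendsto (fun δ : ℝ =>
            Filter.atTop.liminf fun n : ℕ =>
              ENNReal.ofReal (Real.log (coverNum T (levelSet T Φ p α δ n) n ε) / (n : ℝ)))
          (𝓝[>] 0) (𝓝 (G ε))) ∧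
      Tendsto G (𝓝[>] (0 : ℝ)) (𝓝 Li) ∧ Ls = Li := by
  obtain ⟨C, hC⟩ := hα
  obtain ⟨V, a, hV, hlevel⟩ :=
    exists_birkhoffLevelSet_eq_levelSet T hΦc hΦb (fun i => (hp i).le) hps hC
  simp only [← hlevel]
  exact lambda_limits_exist_general hT hspec hV a
end

section
/- Let (X,T) be a saturated dynamical system, I a finite or countable set of positive integers, and (Φ_i)_{i∈I} real continuous functions on X with sup_{i∈I} ‖Φ_i‖_∞ < ∞. Given real sequences a = (a_i)_{i∈I} and b = (b_i)_{i∈I}, let S(a,b) be the set of x ∈ X such that a_i ≤ liminf_{n→∞} A_nΦ_i(x) ≤ limsup_{n→∞} A_nΦ_i(x) ≤ b_i for all i ∈ I. Then the Bowen topological entropy of S(a,b) equals the supremum of h_μ over all T-invariant Borel probability measures μ satisfying a_i ≤ ∫ Φ_i dμ ≤ b_i for all i ∈ I. -/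
open MeasureTheory Filter Topology Set
open scoped ENNReal NNReal

/-!  General definitions: Bowen topological entropy (via covers by Bowen balls),
measure-theoretic (Kolmogorov–Sinai) entropy, generic points, saturated systems,
and the specification property. -/

variable {X : Type*}

/-!
Every point has a limit measure, and a limit measure of a point of the sandwich set is an invariant
measure satisfying the integral constraints, while the generic points of any such measure lie in the
set. Saturation then gives the lower bound, and the upper bound is Bowen's: a set of points each
having a limit measure of entropy at most `t` has entropy at most `t`.

For the latter, let `t < c < s`. Weak-star convergence applies to partitions with null boundaries,
so the entropy of a limit measure provides a code on words of some length `m` that satisfies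
Kraft's inequality and infinitely often compresses the itinerary of the point to fewer than `c` nats
per letter. Code lengths may be taken rational, so that only countably many codes occur. For a
single code there are at most `const * exp (N * c)` itineraries of length `N` that it compresses,
and a Borel–Cantelli argument shows that the points it compresses infinitely often are null for the
exponent `s`.
-/

section BowenEntropy

variable [PseudoMetricSpace X] {T : X → X} {Y Z : Set X} {s ε : ℝ} {n : ℕ}

theorem bowenH_mono (h : Y ⊆ Z) : bowenH T Y s ε n ≤ bowenH T Z s ε n :=
  iInf₂_mono fun _ _ => iInf_mono fun _ => iInf_mono' fun hZ => ⟨h.trans hZ, le_rfl⟩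

theorem bowenEntropy_mono (h : Y ⊆ Z) : bowenEntropy T Y ≤ bowenEntropy T Z :=
  iSup₂_mono fun _ _ => sInf_le_sInf <| image_mono fun _ hs =>
    nonpos_iff_eq_zero.1 <| (iSup_mono fun _ => bowenH_mono h).trans_eq hs

theorem bowenH_le_tsum {C : Set (X × ℕ)} (hC : C.Countable) (hn : ∀ p ∈ C, n ≤ p.2)
    (hZ : Z ⊆ ⋃ p ∈ C, bowenBall T p.1 p.2 ε) :
    bowenH T Z s ε n ≤ ∑' p : C, ENNReal.ofReal (Real.exp (-s * (p : X × ℕ).2)) :=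
  iInf₂_le_of_le C hC <| iInf₂_le hn hZ

theorem bowenH_le_of_subset_bowenBall {l : ℕ} (hn : n ≤ l)
    (hZ : ∀ x ∈ Z, Z ⊆ bowenBall T x l ε) :
    bowenH T Z s ε n ≤ ENNReal.ofReal (Real.exp (-s * l)) := by
  rcases Z.eq_empty_or_nonempty with rfl | ⟨x, hx⟩
  · refine (bowenH_le_tsum countable_empty (by simp) (empty_subset _)).trans ?_
    simp only [tsum_empty, zero_le]
  · refine (bowenH_le_tsum (countable_singleton (x, l)) (by simpa using hn)
      (by simpa using hZ x hx)).trans_eq ?_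
    rw [tsum_singleton (x, l) fun p => ENNReal.ofReal (Real.exp (-s * p.2))]

theorem bowenH_iUnion_le {ι : Type*} [Countable ι] (Y : ι → Set X) :
    bowenH T (⋃ i, Y i) s ε n ≤ ∑' i, bowenH T (Y i) s ε n := by
  refine ENNReal.le_of_forall_pos_le_add fun η hη hfin => ?_
  obtain ⟨δ, hδ, hδη⟩ := ENNReal.exists_pos_sum_of_countable (ENNReal.coe_pos.2 hη).ne' ι
  have exists_cover (i : ι) : ∃ C : Set (X × ℕ), C.Countable ∧ (∀ p ∈ C, n ≤ p.2) ∧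
      Y i ⊆ ⋃ p ∈ C, bowenBall T p.1 p.2 ε ∧
      ∑' p : C, ENNReal.ofReal (Real.exp (-s * (p : X × ℕ).2)) < bowenH T (Y i) s ε n + δ i := by
    have : bowenH T (Y i) s ε n < bowenH T (Y i) s ε n + δ i :=
      ENNReal.lt_add_right (ENNReal.ne_top_of_tsum_ne_top hfin.ne i) (ENNReal.coe_pos.2 (hδ i)).ne'
    nth_rw 1 [bowenH] at this
    simpa only [iInf_lt_iff, exists_prop] using this
  choose C hCc hCn hCY hCs using exists_cover
  calc bowenH T (⋃ i, Y i) s ε n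
      ≤ ∑' p : ⋃ i, C i, ENNReal.ofReal (Real.exp (-s * (p : X × ℕ).2)) := by
        refine bowenH_le_tsum (countable_iUnion hCc) (fun p hp => ?_) (iUnion_subset fun i => ?_)
        · obtain ⟨i, hi⟩ := mem_iUnion.1 hp
          exact hCn i p hi
        · exact (hCY i).trans (biUnion_subset_biUnion_left (subset_iUnion C i))
    _ ≤ ∑' i, ∑' p : C i, ENNReal.ofReal (Real.exp (-s * (p : X × ℕ).2)) :=
        ENNReal.tsum_iUnion_le_tsum (fun p : X × ℕ => ENNReal.ofReal (Real.exp (-s * p.2))) C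
    _ ≤ ∑' i, (bowenH T (Y i) s ε n + δ i) := ENNReal.tsum_le_tsum fun i => (hCs i).le
    _ ≤ (∑' i, bowenH T (Y i) s ε n) + η := by
        rw [ENNReal.tsum_add]
        gcongr

/-- The Borel–Cantelli lemma for the outer measures `bowenH`. -/
theorem bowenH_eq_zero_of_infinite_mem {ι : Type*} [Countable ι] {E : ι → Set X} {l : ι → ℕ}
    (hs : 0 < s) (hE : ∀ i, ∀ x ∈ E i, E i ⊆ bowenBall T x (l i) ε)
    (hsum : ∑' i, ENNReal.ofReal (Real.exp (-s * l i)) ≠ ∞)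
    (hY : ∀ x ∈ Y, {i | x ∈ E i}.Infinite) (n : ℕ) : bowenH T Y s ε n = 0 := by
  have hfin : {i | l i < n}.Finite := by
    have hsmall := (ENNReal.tendsto_cofinite_zero_of_tsum_ne_top hsum).eventually_lt_const
      (ENNReal.ofReal_pos.2 (Real.exp_pos (-s * n)))
    refine (eventually_cofinite.1 hsmall).subset fun i hi => not_lt.2 ?_
    have hi : (l i : ℝ) ≤ n := Nat.cast_le.2 (le_of_lt hi)
    refine ENNReal.ofReal_le_ofReal (Real.exp_le_exp.2 ?_)
    nlinarith
  refine nonpos_iff_eq_zero.1 (ge_of_tendsto (ENNReal.tendsto_tsum_compl_atTop_zero hsum) ?_)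
  filter_upwards [eventually_ge_atTop hfin.toFinset] with F hF
  calc bowenH T Y s ε n ≤ bowenH T (⋃ i : {i // i ∉ F}, E i) s ε n := bowenH_mono fun x hx => by
        obtain ⟨i, hi, hiF⟩ := (hY x hx).exists_notMem_finset F
        exact mem_iUnion.2 ⟨⟨i, hiF⟩, hi⟩
    _ ≤ ∑' i : {i // i ∉ F}, bowenH T (E i) s ε n := bowenH_iUnion_le _
    _ ≤ ∑' i : {i // i ∉ F}, ENNReal.ofReal (Real.exp (-s * l i)) :=
        ENNReal.tsum_le_tsum fun i => bowenH_le_of_subset_bowenBall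
          (not_lt.1 fun hi => i.2 (hF (hfin.mem_toFinset.2 hi))) (hE i)

theorem bowenEntropy_le_of_forall_bowenH_eq_zero {t : ℝ≥0∞}
    (h : ∀ s : ℝ≥0, t < s → ∀ ε > 0, ∀ n, bowenH T Z s ε n = 0) : bowenEntropy T Z ≤ t := by
  refine iSup₂_le fun ε hε => le_of_forall_gt fun u hu => ?_
  obtain ⟨s, hts, hsu⟩ := ENNReal.lt_iff_exists_nnreal_btwn.1 hu
  refine (sInf_le (mem_image_of_mem _ ?_)).trans_lt hsu
  simp only [mem_ofPred_eq, h s hts ε hε, iSup_const]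

end BowenEntropy

section Coding

variable {W A : Type*}

/-- Kraft's inequality for a code on the finite alphabet `W`; the code lengths `L` are measured in
natural units and need not be integers. -/
def Kraft [Fintype W] (L : W → ℝ) : Prop :=
  ∑ w, Real.exp (-L w) ≤ 1

namespace Kraft

variable [Fintype W] {L : W → ℝ}

theorem nonneg (hL : Kraft L) (w : W) : 0 ≤ L w := by
  have h : Real.exp (-L w) ≤ 1 :=
    (Finset.single_le_sum (f := fun w => Real.exp (-L w)) (fun _ _ => (Real.exp_pos _).le)
      (Finset.mem_univ w)).trans hL
  simpa using h

theorem mono {L' : W → ℝ} (hL : Kraft L) (h : ∀ w, L w ≤ L' w) : Kraft L' :=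
  (Finset.sum_le_sum fun w _ => Real.exp_le_exp.2 (neg_le_neg (h w))).trans hL

theorem concat (hL : Kraft L) (K : ℕ) : Kraft fun v : Fin K → W => ∑ k, L (v k) := by
  calc ∑ v : Fin K → W, Real.exp (-∑ k, L (v k))
      = ∑ v : Fin K → W, ∏ k, Real.exp (-L (v k)) := by
        simp only [← Finset.sum_neg_distrib, Real.exp_sum]
    _ = (∑ w, Real.exp (-L w)) ^ K := (Fintype.sum_pow (fun w => Real.exp (-L w)) K).symm
    _ ≤ 1 := pow_le_one₀ (Finset.sum_nonneg fun _ _ => (Real.exp_pos _).le) hL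

theorem card_le_exp (hL : Kraft L) (B : ℝ) : (Nat.card {w // L w ≤ B} : ℝ) ≤ Real.exp B := by
  classical
  calc (Nat.card {w // L w ≤ B} : ℝ) = ∑ w with L w ≤ B, (1 : ℝ) := by
        simp [Fintype.card_subtype]
    _ ≤ ∑ w with L w ≤ B, Real.exp B * Real.exp (-L w) := Finset.sum_le_sum fun w hw => by
        rw [← Real.exp_add]
        exact Real.one_le_exp (by linarith [(Finset.mem_filter.1 hw).2])
    _ ≤ ∑ w, Real.exp B * Real.exp (-L w) :=
        Finset.sum_le_univ_sum_of_nonneg fun _ => by positivity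
    _ = Real.exp B * ∑ w, Real.exp (-L w) := (Finset.mul_sum ..).symm
    _ ≤ Real.exp B := mul_le_of_le_one_right (Real.exp_pos B).le hL

end Kraft

theorem exists_kraft_sum_mul_lt [Fintype W] {p : W → ℝ} (hp : ∀ w, 0 ≤ p w) (hp1 : ∑ w, p w = 1)
    {C : ℝ} (hC : ∑ w, Real.negMulLog (p w) < C) :
    ∃ L : W → ℝ, Kraft L ∧ ∑ w, p w * L w < C := by
  obtain ⟨δ, hδ, hδC⟩ : ∃ δ > 0, ∑ w, Real.negMulLog (p w) + δ < C :=
    ⟨(C - ∑ w, Real.negMulLog (p w)) / 2, by linarith, by linarith⟩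
  have : Nonempty W := by
    by_contra hW
    simp [not_nonempty_iff.1 hW] at hp1
  -- The optimal lengths `-log (p w)` are infinite where `p` vanishes, so `p` is first mixed with
  -- the uniform distribution.
  set q : W → ℝ := fun w => (p w + δ / Fintype.card W) / (1 + δ) with hq
  have hq_pos (w : W) : 0 < q w := by
    have := hp w
    positivity
  have hq_sum : ∑ w, q w = 1 := by
    rw [hq, ← Finset.sum_div, Finset.sum_add_distrib, hp1, Finset.sum_const, nsmul_eq_mul,
      Finset.card_univ]
    field_simp
  refine ⟨fun w => -Real.log (q w), ?_, hδC.trans_le' ?_⟩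
  · simp only [Kraft, neg_neg, Real.exp_log (hq_pos _), hq_sum, le_refl]
  · have hlog (w : W) : p w * -Real.log (q w) ≤ Real.negMulLog (p w) + p w * δ := by
      rcases (hp w).eq_or_lt with h0 | h0
      · simp [← h0]
      have hpq : Real.log (p w) - Real.log (1 + δ) ≤ Real.log (q w) := by
        rw [← Real.log_div h0.ne' (by positivity)]
        exact Real.log_le_log (by positivity)
          (div_le_div_of_nonneg_right (le_add_of_nonneg_right (by positivity)) (by positivity))
      have hδlog : Real.log (1 + δ) ≤ δ := by
        linarith [Real.log_le_sub_one_of_pos (show 0 < 1 + δ by positivity)]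
      rw [Real.negMulLog]
      nlinarith
    calc ∑ w, p w * -Real.log (q w) ≤ ∑ w, (Real.negMulLog (p w) + p w * δ) :=
          Finset.sum_le_sum fun w _ => hlog w
      _ = ∑ w, Real.negMulLog (p w) + δ := by
          rw [Finset.sum_add_distrib, ← Finset.sum_mul, hp1, one_mul]

theorem exists_rat_kraft_sum_mul_lt [Fintype W] {p : W → ℝ} (hp : ∀ w, 0 ≤ p w)
    (hp1 : ∑ w, p w = 1) {C : ℝ} (hC : ∑ w, Real.negMulLog (p w) < C) :
    ∃ L : W → ℚ, Kraft (fun w => (L w : ℝ)) ∧ ∑ w, p w * L w < C := by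
  obtain ⟨L, hL, hLC⟩ := exists_kraft_sum_mul_lt hp hp1 hC
  obtain ⟨D, hLD, hDC⟩ := exists_between hLC
  choose R hLR hRL using fun w => exists_rat_btwn
    (show L w < L w + (D - ∑ w, p w * L w) by linarith)
  refine ⟨R, hL.mono fun w => (hLR w).le, hDC.trans_le' ?_⟩
  calc ∑ w, p w * R w ≤ ∑ w, p w * (L w + (D - ∑ w, p w * L w)) :=
        Finset.sum_le_sum fun w _ => mul_le_mul_of_nonneg_left (hRL w).le (hp w)
    _ = D := by
        simp only [mul_add, Finset.sum_add_distrib, ← Finset.sum_mul, hp1]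
        ring

/-- The cost of encoding the `N` words of length `m` that start at one of the first `N` letters
of `a`, when the word `w` costs `L w`. -/
def slidingCost {m : ℕ} (L : (Fin m → A) → ℝ) (a : ℕ → A) (N : ℕ) : ℝ :=
  ∑ j ∈ Finset.range N, L fun i => a (j + i)

theorem slidingCost_mono {m : ℕ} {L : (Fin m → A) → ℝ} (hL : ∀ w, 0 ≤ L w) (a : ℕ → A) :
    Monotone (slidingCost L a) := fun _ _ h =>
  Finset.sum_le_sum_of_subset_of_nonneg (Finset.range_subset_range.2 h) fun _ _ _ => hL _

theorem sum_range_mul_eq_sum_sum {M : Type*} [AddCommMonoid M] (f : ℕ → M) (K m : ℕ) :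
    ∑ j ∈ Finset.range (K * m), f j =
      ∑ p ∈ Finset.range m, ∑ k ∈ Finset.range K, f (p + k * m) := by
  rw [Finset.sum_comm]
  induction K with
  | zero => simp only [zero_mul, Finset.range_zero, Finset.sum_empty]
  | succ K ih =>
    rw [add_one_mul, Finset.sum_range_add, ih, Finset.sum_range_succ]
    simp only [add_comm]

theorem exists_sum_residue_le (f : ℕ → ℝ) (K : ℕ) {m : ℕ} (hm : 0 < m) {B : ℝ}
    (h : ∑ j ∈ Finset.range (K * m), f j ≤ m * B) :
    ∃ p < m, ∑ k ∈ Finset.range K, f (p + k * m) ≤ B := by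
  have hle : ∑ p ∈ Finset.range m, ∑ k ∈ Finset.range K, f (p + k * m) ≤
      ∑ _p ∈ Finset.range m, B := by
    simpa only [← sum_range_mul_eq_sum_sum, Finset.sum_const, Finset.card_range, nsmul_eq_mul]
  simpa only [Finset.mem_range] using
    Finset.exists_le_of_sum_le (Finset.nonempty_range_iff.2 hm.ne') hle

theorem apply_eq_of_blocks_eq {a b : ℕ → A} {m K p : ℕ} (hm : 0 < m)
    (hpre : ∀ i < p, a i = b i)
    (hblock : ∀ k < K, ∀ i < m, a (p + k * m + i) = b (p + k * m + i))
    {j : ℕ} (hj : j < K * m) : a j = b j := by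
  rcases lt_or_ge j p with hjp | hjp
  · exact hpre j hjp
  have hdiv : (j - p) / m < K := (Nat.div_lt_iff_lt_mul hm).2 (by lia)
  have h := hblock _ hdiv _ (Nat.mod_lt (j - p) hm)
  rwa [add_assoc, Nat.div_add_mod', Nat.add_sub_cancel' hjp] at h

/-- The words of length `N` that start some sequence of sliding cost at most `C`. -/
def cheapPrefixes {m : ℕ} (L : (Fin m → A) → ℝ) (N : ℕ) (C : ℝ) : Set (Fin N → A) :=
  {w | ∃ a : ℕ → A, (∀ i : Fin N, a i = w i) ∧ slidingCost L a N ≤ C}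

/-- The offset `p` supplied by `exists_sum_residue_le` turns a cheap sequence into a prefix
followed by `K` consecutive blocks, whose total code length is at most `B`. -/
theorem card_cheapPrefixes_le [Fintype A] {m : ℕ} (hm : 0 < m) {L : (Fin m → A) → ℝ}
    (hL : Kraft L) (K : ℕ) (B : ℝ) :
    (Nat.card (cheapPrefixes L (K * m) (m * B)) : ℝ) ≤
      m * Fintype.card A ^ m * Real.exp B := by
  have exists_offset (w : cheapPrefixes L (K * m) (m * B)) :
      ∃ (a : ℕ → A) (p : Fin m), (∀ i : Fin (K * m), a i = w.1 i) ∧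
        ∑ k : Fin K, L (fun i => a (p + k * m + i)) ≤ B := by
    obtain ⟨w, a, haw, ha⟩ := w
    obtain ⟨p, hp, hpB⟩ := exists_sum_residue_le _ K hm ha
    exact ⟨a, ⟨p, hp⟩, haw, by rwa [Finset.sum_range] at hpB⟩
  choose a p haw ha using exists_offset
  let code : _ → Fin m × (Fin m → A) × {v : Fin K → Fin m → A // ∑ k, L (v k) ≤ B} :=
    fun w => (p w, fun i => a w i, ⟨fun k i => a w (p w + k * m + i), ha w⟩)
  have code_injective : Function.Injective code := fun w w' h => by
    simp only [code, Prod.mk.injEq, Subtype.mk.injEq] at h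
    obtain ⟨hp, hu, hv⟩ := h
    refine Subtype.ext (funext fun j => ?_)
    rw [← haw w, ← haw w']
    refine apply_eq_of_blocks_eq (p := p w) hm (fun i hi => ?_) (fun k hk i hi => ?_) j.2
    · exact congrFun hu ⟨i, hi.trans (p w).2⟩
    · simpa only [hp] using congrFun (congrFun hv ⟨k, hk⟩) ⟨i, hi⟩
  refine (Nat.cast_le.2 (Nat.card_le_card_of_injective code code_injective)).trans ?_
  simp only [Nat.card_prod, Nat.card_eq_fintype_card (α := Fin m → A), Fintype.card_pi_const,
    Nat.card_fin, Nat.cast_mul, Nat.cast_pow, ← mul_assoc]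
  exact mul_le_mul_of_nonneg_left ((hL.concat K).card_le_exp B) (by positivity)

end Coding

section CompressibleSet

variable {A : Type*} {m : ℕ}

/-- The points whose orbit has, along the cover `U`, an itinerary `a` such that for infinitely many
`N` the average of `slidingCost L a N` over the `m` possible offsets is at most `N * c`. -/
def compressibleSet (T : X → X) (U : A → Set X) (L : (Fin m → A) → ℝ) (c : ℝ) : Set X :=
  {x | ∃ a : ℕ → A, (∀ j, T^[j] x ∈ U (a j)) ∧ ∃ᶠ N : ℕ in atTop, slidingCost L a N ≤ m * (N * c)}

theorem tsum_sigma_exp_ne_top {D : ℕ → Type*} [∀ N, Finite (D N)] {l : ℕ → ℕ} {M c s : ℝ}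
    (hs : 0 ≤ s) (hcs : c < s) (hcard : ∀ N, (Nat.card (D N) : ℝ) ≤ M * Real.exp (N * c))
    (hl : ∀ N, N ≤ l N + m) :
    ∑' i : Σ N, D N, ENNReal.ofReal (Real.exp (-s * l i.1)) ≠ ∞ := by
  have hM : 0 ≤ M := by simpa using (Nat.cast_nonneg _).trans (hcard 0)
  have hsum : Summable fun N : ℕ => M * Real.exp (s * m) * Real.exp (c - s) ^ N :=
    (summable_geometric_of_lt_one (Real.exp_pos _).le
      (Real.exp_lt_one_iff.2 (sub_neg.2 hcs))).mul_left _
  refine ne_top_of_le_ne_top hsum.tsum_ofReal_ne_top ?_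
  rw [ENNReal.tsum_sigma fun N (_ : D N) => ENNReal.ofReal (Real.exp (-s * l N))]
  refine ENNReal.tsum_le_tsum fun N => ?_
  have := Fintype.ofFinite (D N)
  rw [tsum_fintype, Finset.sum_const, Finset.card_univ, nsmul_eq_mul, ← Nat.card_eq_fintype_card,
    ← ENNReal.ofReal_natCast, ← ENNReal.ofReal_mul (Nat.cast_nonneg _)]
  refine ENNReal.ofReal_le_ofReal ?_
  have hNl : (N : ℝ) ≤ l N + m := mod_cast hl N
  calc (Nat.card (D N) : ℝ) * Real.exp (-s * l N)
      ≤ M * Real.exp (N * c) * Real.exp (s * m - s * N) := by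
        refine mul_le_mul (hcard N) (Real.exp_le_exp.2 ?_) (Real.exp_pos _).le (by positivity)
        nlinarith
    _ = M * Real.exp (s * m) * Real.exp (c - s) ^ N := by
        rw [← Real.exp_nat_mul, mul_assoc, mul_assoc, ← Real.exp_add, ← Real.exp_add]
        ring_nf

theorem bowenH_compressibleSet_eq_zero [PseudoMetricSpace X] [Fintype A] {T : X → X}
    {U : A → Set X} {ε : ℝ} (hU : ∀ i, ∀ x ∈ U i, ∀ y ∈ U i, dist x y < ε) (hm : 0 < m)
    {L : (Fin m → A) → ℝ} (hL : Kraft L) {c s : ℝ} (hs : 0 < s) (hcs : c < s) (n : ℕ) :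
    bowenH T (compressibleSet T U L c) s ε n = 0 := by
  have hlen (N : ℕ) : N ≤ N / m * m + m := by
    have := Nat.div_add_mod' N m
    have := Nat.mod_lt N hm
    lia
  have hsum := tsum_sigma_exp_ne_top hs.le hcs (l := fun N => N / m * m)
    (fun N => card_cheapPrefixes_le hm hL (N / m) (N * c)) hlen
  refine bowenH_eq_zero_of_infinite_mem
    (E := fun i => {x | ∀ j : Fin (i.1 / m * m), T^[j] x ∈ U (i.2.1 j)}) hs ?_ hsum ?_ n
  · exact fun ⟨N, w⟩ x hx y hy j hj => hU (w.1 ⟨j, hj⟩) _ (hx ⟨j, hj⟩) _ (hy ⟨j, hj⟩)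
  · rintro x ⟨a, hxa, ha⟩
    refine Set.Infinite.of_image Sigma.fst ((Nat.frequently_atTop_iff_infinite.1 ha).mono ?_)
    refine fun N hN => ⟨⟨N, fun i => a i, a, fun _ => rfl, ?_⟩, fun j => hxa j, rfl⟩
    exact (slidingCost_mono hL.nonneg a (Nat.div_mul_le_self N m)).trans hN

end CompressibleSet

section LimitMeasure

theorem birkhoffAverage_eq_sum_div (T : X → X) (f : X → ℝ) (n : ℕ) (x : X) :
    birkhoffAverage ℝ T f n x = (∑ j ∈ Finset.range n, f (T^[j] x)) / n := by
  rw [birkhoffAverage, birkhoffSum, smul_eq_mul, inv_mul_eq_div]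

theorem abs_sum_div_le_norm [TopologicalSpace X] [CompactSpace X] (T : X → X) (x : X)
    (f : C(X, ℝ)) (n : ℕ) : |(∑ j ∈ Finset.range n, f (T^[j] x)) / (n : ℝ)| ≤ ‖f‖ := by
  rw [abs_div, Nat.abs_cast]
  refine div_le_of_le_mul₀ n.cast_nonneg (norm_nonneg f) ?_
  calc |∑ j ∈ Finset.range n, f (T^[j] x)|
      ≤ ∑ j ∈ Finset.range n, |f (T^[j] x)| := Finset.abs_sum_le_sum_abs _ _
    _ ≤ ∑ _j ∈ Finset.range n, ‖f‖ := Finset.sum_le_sum fun j _ => f.norm_coe_le_norm _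
    _ = ‖f‖ * n := by rw [Finset.sum_const, Finset.card_range, nsmul_eq_mul, mul_comm]

variable [MeasurableSpace X] {T : X → X} {x : X} {μ : Measure X}

/-- The uniform distribution on the first `n + 1` points of the orbit of `x`. There is no
probability measure on an orbit segment of length `0`, whence the shift of `n`. -/
noncomputable def empiricalMeasure (T : X → X) (x : X) (n : ℕ) : ProbabilityMeasure X :=
  ⟨((n + 1 : ℕ) : ℝ≥0∞)⁻¹ • ∑ j ∈ Finset.range (n + 1), Measure.dirac (T^[j] x), ⟨by
    simp only [Measure.smul_apply, Measure.finsetSum_apply, measure_univ, Finset.sum_const,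
      Finset.card_range, nsmul_eq_mul, mul_one, smul_eq_mul]
    exact ENNReal.inv_mul_cancel (Nat.cast_ne_zero.2 n.succ_ne_zero) (ENNReal.natCast_ne_top _)⟩⟩

theorem integral_empiricalMeasure (T : X → X) (x : X) (n : ℕ) {f : X → ℝ}
    (hf : StronglyMeasurable f) :
    ∫ y, f y ∂(empiricalMeasure T x n : Measure X) = birkhoffAverage ℝ T f (n + 1) x := by
  rw [empiricalMeasure, ProbabilityMeasure.coe_mk, integral_smul_measure,
    integral_finsetSum_measure fun j _ => integrable_dirac' hf (by simp), ENNReal.toReal_inv,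
    ENNReal.toReal_natCast, birkhoffAverage, birkhoffSum]
  simp only [integral_dirac' f _ hf]

namespace IsLimitMeasure

theorem isProbabilityMeasure [TopologicalSpace X]
    (h : IsLimitMeasure T x μ) : IsProbabilityMeasure μ := by
  obtain ⟨φ, hφ, hlim⟩ := h
  have hlim1 : Tendsto (fun k => (φ k : ℝ) / φ k) atTop (𝓝 (μ.real univ)) := by
    simpa using hlim (.const X 1)
  refine isProbabilityMeasure_iff_real.2 (tendsto_nhds_unique hlim1 ?_)
  refine tendsto_const_nhds.congr' ?_
  filter_upwards [hφ.tendsto_atTop.eventually_gt_atTop 0] with k hk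
  exact (div_self (Nat.cast_ne_zero.2 hk.ne')).symm

theorem exists_tendsto_empiricalMeasure [TopologicalSpace X] [BorelSpace X]
    {μ : ProbabilityMeasure X} (h : IsLimitMeasure T x μ) :
    ∃ ψ : ℕ → ℕ, StrictMono ψ ∧ Tendsto (fun k => empiricalMeasure T x (ψ k)) atTop (𝓝 μ) := by
  obtain ⟨φ, hφ, hlim⟩ := h
  have hpos (k : ℕ) : φ (k + 1) - 1 + 1 = φ (k + 1) :=
    Nat.sub_add_cancel ((Nat.zero_le _).trans_lt (hφ k.succ_pos))
  refine ⟨fun k => φ (k + 1) - 1, fun i j hij => ?_,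
    ProbabilityMeasure.tendsto_iff_forall_integral_tendsto.2 fun f => ?_⟩
  · have := hφ (Nat.succ_lt_succ hij)
    have := hpos i
    lia
  · simp only [integral_empiricalMeasure T x _ f.continuous.measurable.stronglyMeasurable, hpos,
      birkhoffAverage_eq_sum_div]
    exact (hlim f.toContinuousMap).comp (tendsto_add_atTop_nat 1)

theorem measurePreserving [TopologicalSpace X] [CompactSpace X] [BorelSpace X]
    [HasOuterApproxClosed X] (hT : Continuous T) (h : IsLimitMeasure T x μ) :
    MeasurePreserving T μ μ := by
  have := h.isProbabilityMeasure
  obtain ⟨φ, hφ, hlim⟩ := h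
  have := Measure.isProbabilityMeasure_map (μ := μ) hT.aemeasurable
  refine ⟨hT.measurable, ext_of_forall_integral_eq_of_IsFiniteMeasure fun f => ?_⟩
  rw [integral_map hT.aemeasurable f.continuous.aestronglyMeasurable]
  have hshift : Tendsto (fun k => birkhoffAverage ℝ T f (φ k) (T x)) atTop
      (𝓝 (∫ y, f (T y) ∂μ)) := by
    simp only [birkhoffAverage_eq_sum_div, ← Function.iterate_succ_apply,
      Function.iterate_succ_apply']
    exact hlim (f.toContinuousMap.comp ⟨T, hT⟩)
  have hdiff := (tendsto_birkhoffAverage_apply_sub_birkhoffAverage' ℝ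
    f.isBounded_range T x).comp hφ.tendsto_atTop
  have hsub := hshift.sub hdiff
  simp only [Function.comp_apply, sub_sub_cancel, sub_zero, birkhoffAverage_eq_sum_div] at hsub
  exact tendsto_nhds_unique hsub (hlim f.toContinuousMap)

theorem mapClusterPt [TopologicalSpace X] (h : IsLimitMeasure T x μ) (f : C(X, ℝ)) :
    MapClusterPt (∫ y, f y ∂μ) atTop
      fun n : ℕ => (∑ j ∈ Finset.range n, f (T^[j] x)) / (n : ℝ) := by
  obtain ⟨φ, hφ, hlim⟩ := h
  exact (hlim f).mapClusterPt.of_comp hφ.tendsto_atTop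

theorem liminf_le_integral [TopologicalSpace X] [CompactSpace X] (h : IsLimitMeasure T x μ)
    (f : C(X, ℝ)) :
    atTop.liminf (fun n : ℕ => (∑ j ∈ Finset.range n, f (T^[j] x)) / (n : ℝ)) ≤ ∫ y, f y ∂μ :=
  (h.mapClusterPt f).liminf_le <| isBoundedUnder_of ⟨-‖f‖, fun n =>
    (abs_le.1 (abs_sum_div_le_norm T x f n)).1⟩

theorem integral_le_limsup [TopologicalSpace X] [CompactSpace X] (h : IsLimitMeasure T x μ)
    (f : C(X, ℝ)) :
    ∫ y, f y ∂μ ≤ atTop.limsup fun n : ℕ => (∑ j ∈ Finset.range n, f (T^[j] x)) / (n : ℝ) :=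
  (h.mapClusterPt f).le_limsup <| isBoundedUnder_of ⟨‖f‖, fun n =>
    (abs_le.1 (abs_sum_div_le_norm T x f n)).2⟩

end IsLimitMeasure

theorem exists_isLimitMeasure [MetricSpace X] [CompactSpace X] [BorelSpace X] (T : X → X)
    (x : X) : ∃ μ : Measure X, IsLimitMeasure T x μ := by
  obtain ⟨μ, φ, hφ, hμ⟩ := CompactSpace.tendsto_subseq (empiricalMeasure T x)
  refine ⟨μ, fun k => φ k + 1, fun i j hij => Nat.succ_lt_succ (hφ hij), fun f => ?_⟩
  have h := ProbabilityMeasure.tendsto_iff_forall_integral_tendsto.1 hμ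
    (BoundedContinuousFunction.mkOfCompact f)
  simpa only [Function.comp_apply, BoundedContinuousFunction.mkOfCompact_apply,
    integral_empiricalMeasure T x _ f.continuous.measurable.stronglyMeasurable,
    birkhoffAverage_eq_sum_div] using h

theorem integral_comp_eq_sum {W : Type*} [Fintype W] [MeasurableSpace W]
    [MeasurableSingletonClass W] [IsFiniteMeasure μ] {F : X → W} (hF : Measurable F) (L : W → ℝ) :
    ∫ y, L (F y) ∂μ = ∑ w, μ.real (F ⁻¹' {w}) * L w := by
  rw [← integral_map hF.aemeasurable (measurable_of_countable L).aestronglyMeasurable,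
    integral_fintype .of_finite]
  simp only [map_measureReal_apply hF (measurableSet_singleton _), smul_eq_mul]

section DiscreteRange

variable {W : Type*} [TopologicalSpace X] [TopologicalSpace W] [DiscreteTopology W] {F : X → W}

theorem measure_frontier_preimage_eq_zero (hF : ∀ᵐ y ∂μ, ContinuousAt F y) (S : Set W) :
    μ (frontier (F ⁻¹' S)) = 0 := by
  refine measure_eq_zero_iff_ae_notMem.2 ?_
  filter_upwards [hF] with y hFy hy
  obtain ⟨hS, hSc⟩ := frontier_eq_closure_inter_closure.subset hy
  have hyS := hFy.continuousWithinAt.mem_closure hS (mapsTo_preimage F S)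
  have hySc := hFy.continuousWithinAt.mem_closure hSc (mapsTo_preimage F Sᶜ)
  rw [closure_discrete] at hyS hySc
  exact hySc hyS

theorem tendsto_integral_comp_of_ae_continuousAt [OpensMeasurableSpace X] [HasOuterApproxClosed X]
    [Finite W] [MeasurableSpace W] [MeasurableSingletonClass W] {ι : Type*} {l : Filter ι}
    {ν : ι → ProbabilityMeasure X} {μ : ProbabilityMeasure X} (hν : Tendsto ν l (𝓝 μ))
    (hF : Measurable F) (hFμ : ∀ᵐ y ∂(μ : Measure X), ContinuousAt F y) (L : W → ℝ) :
    Tendsto (fun i => ∫ y, L (F y) ∂(ν i : Measure X)) l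
      (𝓝 (∫ y, L (F y) ∂(μ : Measure X))) := by
  have := Fintype.ofFinite W
  simp only [integral_comp_eq_sum hF]
  refine tendsto_finsetSum _ fun w _ => Tendsto.mul_const _ ?_
  exact (ENNReal.tendsto_toReal (measure_ne_top _ _)).comp
    (ProbabilityMeasure.tendsto_measure_of_null_frontier_of_tendsto' hν
      (measure_frontier_preimage_eq_zero hFμ {w}))

theorem IsLimitMeasure.exists_tendsto_birkhoffAverage_comp [BorelSpace X] [HasOuterApproxClosed X]
    [Finite W] [MeasurableSpace W] [MeasurableSingletonClass W] (h : IsLimitMeasure T x μ)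
    (hF : Measurable F) (hFμ : ∀ᵐ y ∂μ, ContinuousAt F y) (L : W → ℝ) :
    ∃ φ : ℕ → ℕ, StrictMono φ ∧
      Tendsto (fun k => birkhoffAverage ℝ T (fun y => L (F y)) (φ k) x) atTop
        (𝓝 (∫ y, L (F y) ∂μ)) := by
  have hμ := h.isProbabilityMeasure
  obtain ⟨ψ, hψ, hlim⟩ :=
    IsLimitMeasure.exists_tendsto_empiricalMeasure (μ := (⟨μ, hμ⟩ : ProbabilityMeasure X)) h
  refine ⟨fun k => ψ k + 1, fun i j hij => Nat.succ_lt_succ (hψ hij), ?_⟩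
  have hLF : StronglyMeasurable fun y => L (F y) :=
    ((measurable_of_countable L).comp hF).stronglyMeasurable
  simp only [← integral_empiricalMeasure T x _ hLF]
  exact tendsto_integral_comp_of_ae_continuousAt hlim hF hFμ L

end DiscreteRange

end LimitMeasure

section Partition

variable {A : Type*} {m : ℕ} {T : X → X} {P : X → A}

/-- The first `m` letters of the itinerary of `x` with respect to the partition into the fibres
of `P`. -/
def itineraryWord (T : X → X) (P : X → A) (m : ℕ) (x : X) : Fin m → A :=
  fun i => P (T^[i] x)

theorem slidingCost_itinerary (L : (Fin m → A) → ℝ) (T : X → X) (P : X → A) (x : X) (N : ℕ) :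
    slidingCost L (fun j => P (T^[j] x)) N =
      birkhoffSum T (fun y => L (itineraryWord T P m y)) N x := by
  refine Finset.sum_congr rfl fun j _ => congrArg L (funext fun i => ?_)
  rw [itineraryWord, ← Function.iterate_add_apply, add_comm]

variable [MeasurableSpace X] {μ : Measure X}

theorem measurable_itineraryWord [MeasurableSpace A] (hT : Measurable T) (hP : Measurable P) :
    Measurable (itineraryWord T P m) :=
  measurable_pi_lambda _ fun i => hP.comp (hT.iterate i)

theorem ae_continuousAt_itineraryWord [TopologicalSpace X] [TopologicalSpace A]
    (hT : Continuous T) (hμ : MeasurePreserving T μ μ) (hP : ∀ᵐ x ∂μ, ContinuousAt P x) :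
    ∀ᵐ x ∂μ, ContinuousAt (itineraryWord T P m) x := by
  have hiter (i : Fin m) : ∀ᵐ x ∂μ, ContinuousAt P (T^[i] x) :=
    (hμ.iterate i).quasiMeasurePreserving.ae hP
  filter_upwards [ae_all_iff.2 hiter] with x hx
  exact continuousAt_pi.2 fun i => (hx i).comp (hT.iterate i).continuousAt

theorem sum_negMulLog_le_partInfo [Fintype A] {e : A → ℕ} (he : Function.Injective e)
    (T : X → X) (μ : Measure X) (P : X → A) (m : ℕ) :
    ∑ w, ENNReal.ofReal (Real.negMulLog (μ.real (itineraryWord T P m ⁻¹' {w}))) ≤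
      partInfo T μ (e ∘ P) m := by
  have hinj : Function.Injective fun w : Fin m → A => List.ofFn (e ∘ w) :=
    List.ofFn_injective.comp he.comp_left
  have hword (w : Fin m → A) :
      (fun x => (List.range m).map fun j => (e ∘ P) (T^[j] x)) ⁻¹' {List.ofFn (e ∘ w)} =
        itineraryWord T P m ⁻¹' {w} := by
    ext x
    have hlist : (List.range m).map (fun j => (e ∘ P) (T^[j] x)) =
        List.ofFn (e ∘ itineraryWord T P m x) := by
      rw [List.ofFn_eq_map, ← List.map_coe_finRange_eq_range, List.map_map]
      rfl
    rw [mem_preimage, mem_preimage, mem_singleton_iff, mem_singleton_iff, hlist]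
    exact hinj.eq_iff
  rw [← tsum_fintype (L := .unconditional _)]
  refine le_trans (le_of_eq (tsum_congr fun w => ?_))
    (ENNReal.tsum_comp_le_tsum_of_injective hinj _)
  rw [hword, Measure.real]

theorem exists_sum_negMulLog_lt [Fintype A] [MeasurableSpace A] [MeasurableSingletonClass A]
    [IsProbabilityMeasure μ] (hP : Measurable P) {c : ℝ≥0} (h : ksEntropy T μ < c) :
    ∃ m : ℕ, 0 < m ∧
      ∑ w, Real.negMulLog (μ.real (itineraryWord T P m ⁻¹' {w})) < m * c := by
  obtain ⟨e, he⟩ := Countable.exists_injective_nat A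
  have hrate : atTop.liminf (fun n : ℕ => partInfo T μ (e ∘ P) n / n) < c :=
    h.trans_le' <| le_iSup_of_le (e ∘ P) <| le_iSup₂_of_le ((measurable_of_countable e).comp hP)
      ((finite_range e).subset (range_comp_subset_range P e)) le_rfl
  obtain ⟨m, hm, hm0⟩ := ((frequently_lt_of_liminf_lt (by isBoundedDefault) hrate).and_eventually
    (eventually_gt_atTop 0)).exists
  rw [ENNReal.div_lt_iff (.inl (Nat.cast_ne_zero.2 hm0.ne')) (.inl (ENNReal.natCast_ne_top m))]
    at hm
  refine ⟨m, hm0, (ENNReal.ofReal_lt_ofReal_iff_of_nonneg (Finset.sum_nonneg fun w _ =>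
    Real.negMulLog_nonneg measureReal_nonneg measureReal_le_one)).1 ?_⟩
  rw [ENNReal.ofReal_sum_of_nonneg fun w _ =>
    Real.negMulLog_nonneg measureReal_nonneg measureReal_le_one, mul_comm,
    ENNReal.ofReal_mul c.coe_nonneg, ENNReal.ofReal_coe_nnreal, ENNReal.ofReal_natCast]
  exact (sum_negMulLog_le_partInfo he T μ P m).trans_lt hm

theorem eventually_mem_iff_of_notMem_frontier {Y : Type*} [TopologicalSpace Y] {s : Set Y} {y : Y}
    (hy : y ∉ frontier s) : ∀ᶠ z in 𝓝 y, z ∈ s ↔ y ∈ s := by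
  rcases compl_frontier_eq_union_interior.subset hy with hs | hs
  · filter_upwards [mem_interior_iff_mem_nhds.1 hs] with z hz
    exact iff_of_true hz (interior_subset hs)
  · filter_upwards [mem_interior_iff_mem_nhds.1 hs] with z hz
    exact iff_of_false hz (interior_subset hs)

theorem exists_measurable_dist_lt_ae_continuousAt [PseudoMetricSpace X] [OpensMeasurableSpace X]
    [Finite A] [TopologicalSpace A] [MeasurableSpace A] (μ : Measure X) [SFinite μ] {z : A → X}
    {δ ε : ℝ} (hδε : δ < ε) (hz : ∀ x, ∃ i, dist x (z i) < δ) :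
    ∃ P : X → A, Measurable P ∧ (∀ x, dist x (z (P x)) < ε) ∧ ∀ᵐ x ∂μ, ContinuousAt P x := by
  choose ρ hρ hρ0 using fun i => exists_null_frontier_thickening μ {z i} hδε
  simp only [Metric.thickening_singleton] at hρ0
  let N (x : X) : {S : Set A // S.Nonempty} :=
    ⟨{i | x ∈ Metric.ball (z i) (ρ i)}, (hz x).imp fun i hi => hi.trans (hρ i).1⟩
  have hN : Measurable N := (measurable_set_iff.2 fun i =>
    Metric.isOpen_ball.measurableSet.mem).subtype_mk
  refine ⟨fun x => (N x).2.some, ?_, fun x => ?_, ?_⟩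
  · exact (measurable_of_countable fun S : {S : Set A // S.Nonempty} => S.2.some).comp hN
  · exact (N x).2.some_mem.trans (hρ _).2
  · filter_upwards [ae_all_iff.2 fun i => measure_eq_zero_iff_ae_notMem.1 (hρ0 i)] with x hx
    have hNx : ∀ᶠ y in 𝓝 x, N y = N x := by
      filter_upwards [eventually_all.2 fun i => eventually_mem_iff_of_notMem_frontier (hx i)]
        with y hy
      exact Subtype.ext (Set.ext hy)
    refine ContinuousAt.congr (f := fun _ => (N x).2.some) continuousAt_const ?_
    filter_upwards [hNx] with y hy
    rw [hy]

theorem IsLimitMeasure.exists_mem_compressibleSet [PseudoMetricSpace X] [CompactSpace X]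
    [BorelSpace X] [Fintype A] {x : X} (hT : Continuous T) (hμ : IsLimitMeasure T x μ) {z : A → X}
    {δ ε : ℝ} (hδε : δ < ε) (hz : ∀ x, ∃ i, dist x (z i) < δ) {c : ℝ≥0} (hc : ksEntropy T μ < c) :
    ∃ m > 0, ∃ L : (Fin m → A) → ℚ, Kraft (fun w => (L w : ℝ)) ∧
      x ∈ compressibleSet T (fun i => Metric.ball (z i) ε) (fun w => (L w : ℝ)) c := by
  let _ : TopologicalSpace A := ⊥
  have : DiscreteTopology A := ⟨rfl⟩
  let _ : MeasurableSpace A := ⊤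
  have := hμ.isProbabilityMeasure
  obtain ⟨P, hP, hPz, hPμ⟩ := exists_measurable_dist_lt_ae_continuousAt μ hδε hz
  obtain ⟨m, hm, hmc⟩ := exists_sum_negMulLog_lt hP hc
  have hF : Measurable (itineraryWord T P m) := measurable_itineraryWord hT.measurable hP
  have hsum : ∑ w, μ.real (itineraryWord T P m ⁻¹' {w}) = 1 := by
    simpa using (integral_comp_eq_sum (μ := μ) hF fun _ => 1).symm
  obtain ⟨L, hL, hLc⟩ := exists_rat_kraft_sum_mul_lt (fun w => measureReal_nonneg) hsum hmc
  rw [← integral_comp_eq_sum hF fun w => (L w : ℝ)] at hLc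
  obtain ⟨φ, hφ, hlim⟩ := hμ.exists_tendsto_birkhoffAverage_comp hF
    (ae_continuousAt_itineraryWord hT (hμ.measurePreserving hT) hPμ) fun w => (L w : ℝ)
  refine ⟨m, hm, L, hL, fun j => P (T^[j] x), fun j => hPz _,
    hφ.tendsto_atTop.frequently (Eventually.frequently ?_)⟩
  filter_upwards [hlim.eventually_le_const hLc, hφ.tendsto_atTop.eventually_gt_atTop 0]
    with k hk hk0
  rw [birkhoffAverage, smul_eq_mul, inv_mul_le_iff₀ (Nat.cast_pos.2 hk0)] at hk
  rw [slidingCost_itinerary]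
  linarith

end Partition

section VariationalPrinciple

variable [MeasurableSpace X] {T : X → X}

theorem bowenEntropy_le_of_exists_isLimitMeasure [PseudoMetricSpace X] [CompactSpace X]
    [BorelSpace X] (hT : Continuous T) {Z : Set X} {t : ℝ≥0∞}
    (h : ∀ x ∈ Z, ∃ μ, IsLimitMeasure T x μ ∧ ksEntropy T μ ≤ t) : bowenEntropy T Z ≤ t := by
  refine bowenEntropy_le_of_forall_bowenH_eq_zero fun s hts ε hε n => ?_
  obtain ⟨c, htc, hcs⟩ := ENNReal.lt_iff_exists_nnreal_btwn.1 hts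
  have hcs : (c : ℝ) < s := mod_cast hcs
  obtain ⟨A, -, hA, hcover⟩ := (isCompact_univ (X := X)).finite_cover_balls
    (show 0 < ε / 4 by linarith)
  have := hA.fintype
  have hnet (x : X) : ∃ z : A, dist x z < ε / 4 := by
    obtain ⟨z, hz, hxz⟩ := mem_iUnion₂.1 (hcover (mem_univ x))
    exact ⟨⟨z, hz⟩, hxz⟩
  let C (q : {q : Σ m : ℕ, (Fin m → A) → ℚ // 0 < q.1 ∧ Kraft fun w => (q.2 w : ℝ)}) : Set X :=
    compressibleSet T (fun z : A => Metric.ball (z : X) (ε / 2)) (fun w => (q.1.2 w : ℝ)) c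
  have hball (z : A) : ∀ x ∈ Metric.ball (z : X) (ε / 2), ∀ y ∈ Metric.ball (z : X) (ε / 2),
      dist x y < ε := fun x hx y hy => by
    linarith [dist_triangle_right x y z, Metric.mem_ball.1 hx, Metric.mem_ball.1 hy]
  have hZC : Z ⊆ ⋃ q, C q := fun x hx => by
    obtain ⟨μ, hμ, hμt⟩ := h x hx
    obtain ⟨m, hm, L, hL, hxL⟩ := hμ.exists_mem_compressibleSet hT
      (show ε / 4 < ε / 2 by linarith) hnet (hμt.trans_lt htc)
    exact mem_iUnion.2 ⟨⟨⟨m, L⟩, hm, hL⟩, hxL⟩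
  refine nonpos_iff_eq_zero.1 ?_
  calc bowenH T Z s ε n ≤ bowenH T (⋃ q, C q) s ε n := bowenH_mono hZC
    _ ≤ ∑' q, bowenH T (C q) s ε n := bowenH_iUnion_le C
    _ = 0 := ENNReal.tsum_eq_zero.2 fun q => bowenH_compressibleSet_eq_zero hball q.2.1 q.2.2
        (c.coe_nonneg.trans_lt hcs) hcs n

theorem Saturated.bowenEntropy_eq_iSup [MetricSpace X] [CompactSpace X] [BorelSpace X]
    (hT : Continuous T) (hsat : Saturated T) {Z : Set X} {K : Set (Measure X)}
    (hZK : ∀ x ∈ Z, ∀ μ, IsLimitMeasure T x μ → μ ∈ K)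
    (hKZ : ∀ μ ∈ K, ∀ x, IsGeneric T μ x → x ∈ Z) :
    bowenEntropy T Z =
      ⨆ μ ∈ {μ : Measure X | IsProbabilityMeasure μ ∧ MeasurePreserving T μ μ ∧ μ ∈ K},
        ksEntropy T μ := by
  refine le_antisymm (bowenEntropy_le_of_exists_isLimitMeasure hT fun x hx => ?_)
    (iSup₂_le fun μ ⟨hprob, hinv, hμK⟩ => ?_)
  · obtain ⟨μ, hμ⟩ := exists_isLimitMeasure T x
    exact ⟨μ, hμ, le_iSup₂ (f := fun μ _ => ksEntropy T μ) μ
      ⟨hμ.isProbabilityMeasure, hμ.measurePreserving hT, hZK x hx μ hμ⟩⟩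
  · rw [← hsat μ hprob hinv]
    exact bowenEntropy_mono (hKZ μ hμK)

end VariationalPrinciple

theorem entropy_of_sandwich_set_general [MetricSpace X] [CompactSpace X] [MeasurableSpace X]
    [BorelSpace X] {T : X → X} (hT : Continuous T) (hsat : Saturated T) {ι : Type*}
    {Φ : ι → X → ℝ} (hΦ : ∀ i, Continuous (Φ i)) (a b : ι → ℝ) :
    bowenEntropy T {x : X | ∀ i,
        a i ≤ atTop.liminf (fun n : ℕ => (∑ j ∈ Finset.range n, Φ i (T^[j] x)) / (n : ℝ)) ∧
        atTop.limsup (fun n : ℕ => (∑ j ∈ Finset.range n, Φ i (T^[j] x)) / (n : ℝ)) ≤ b i} =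
      ⨆ μ ∈ {μ : Measure X | IsProbabilityMeasure μ ∧ MeasurePreserving T μ μ ∧
        ∀ i, a i ≤ (∫ x, Φ i x ∂μ) ∧ (∫ x, Φ i x ∂μ) ≤ b i}, ksEntropy T μ := by
  refine hsat.bowenEntropy_eq_iSup hT
    (K := {μ | ∀ i, a i ≤ ∫ x, Φ i x ∂μ ∧ ∫ x, Φ i x ∂μ ≤ b i})
    (fun x hx μ hlim i => ?_) (fun μ hμ x hx i => ?_)
  · exact ⟨(hx i).1.trans (hlim.liminf_le_integral ⟨Φ i, hΦ i⟩),
      (hlim.integral_le_limsup ⟨Φ i, hΦ i⟩).trans (hx i).2⟩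
  · have h := hx ⟨Φ i, hΦ i⟩
    simp only [ContinuousMap.coe_mk] at h
    rw [h.liminf_eq, h.limsup_eq]
    exact hμ i

/-- **Corollary 4.1.** For a saturated system and a uniformly bounded family `(Φ_i)_{i∈I}`
of continuous functions (`I` a set of positive integers), the Bowen entropy of
`S(a,b) = {x : a_i ≤ liminf A_nΦ_i(x) ≤ limsup A_nΦ_i(x) ≤ b_i  ∀ i ∈ I}` equals the
supremum of `h_μ` over invariant probability measures with `a_i ≤ ∫ Φ_i dμ ≤ b_i` for
all `i ∈ I`. -/
theorem entropy_of_sandwich_set {X : Type*} [MetricSpace X] [CompactSpace X]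
    [MeasurableSpace X] [BorelSpace X] (T : X → X) (hT : Continuous T) (hsat : Saturated T)
    (I : Set ℕ) (hI : ∀ i ∈ I, 1 ≤ i) (Φ : ℕ → X → ℝ)
    (hΦc : ∀ i ∈ I, Continuous (Φ i)) (hΦb : ∃ C : ℝ, ∀ i ∈ I, ∀ x, |Φ i x| ≤ C)
    (a b : ℕ → ℝ) :
    bowenEntropy T {x : X | ∀ i ∈ I,
        a i ≤ Filter.atTop.liminf
            (fun n : ℕ => (∑ j ∈ Finset.range n, Φ i (T^[j] x)) / (n : ℝ)) ∧
        Filter.atTop.limsup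
            (fun n : ℕ => (∑ j ∈ Finset.range n, Φ i (T^[j] x)) / (n : ℝ)) ≤ b i} =
      ⨆ μ ∈ {μ : Measure X | IsProbabilityMeasure μ ∧ MeasurePreserving T μ μ ∧
        ∀ i ∈ I, a i ≤ (∫ x, Φ i x ∂μ) ∧ (∫ x, Φ i x ∂μ) ≤ b i}, ksEntropy T μ := by
  simpa only [Subtype.forall] using entropy_of_sandwich_set_general hT hsat
    (fun i : I => hΦc i i.2) (fun i => a i) (fun i => b i)
end
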